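/- arXiv:2108.13569 — 3 statements merged into one kernel-verified Lean document; each statement's English description precedes it below -/
import Mathlib

section
/- Let P₁,…,Pₘ be a strongly separated family of full-dimensional polytopes in ℝ^d with 1 ≤ m ≤ d. Then the set 𝒯 = {(u,α) ∈ S^{d−1} × ℝ : for every i, H_{u,α} ∩ Pᵢ ≠ ∅ and Pᵢ ⊆ {x : ⟨u,x⟩ ≥ α}} of oriented hyperplanes tangent to every member of the family and containing the family in their nonnegative side is homeomorphic to the sphere S^{d−m}. -/
open scoped InnerProductSpace

/-- A family of sets in `ℝ^d` is strongly separated if every subset of indices can be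
strictly separated from its complement by an affine hyperplane. -/
def StronglySeparated {d m : ℕ} (S : Fin m → Set (EuclideanSpace ℝ (Fin d))) : Prop :=
  ∀ I : Finset (Fin m), ∃ (u : EuclideanSpace ℝ (Fin d)) (α : ℝ), u ≠ 0 ∧
    (∀ i ∈ I, ∀ x ∈ S i, ⟪u, x⟫_ℝ < α) ∧ (∀ i, i ∉ I → ∀ x ∈ S i, α < ⟪u, x⟫_ℝ)

namespace CommonTangents

section

open Filter Topology

variable {E X G Y : Type*} [NormedAddCommGroup E] [NormedSpace ℝ E]
  [NormedAddCommGroup G] [NormedSpace ℝ G] [NormedAddCommGroup Y] [NormedSpace ℝ Y]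
  [NormedAddCommGroup X] [NormedSpace ℝ X]

/-- Bi-Lipschitz, positively homogeneous, additive along `U`. -/
structure NiceA (U : Submodule ℝ E) (A : E ≃ X) : Prop where
  lip : ∃ K : ℝ, ∀ u v, ‖A u - A v‖ ≤ K * ‖u - v‖
  lip_symm : ∃ K : ℝ, 0 ≤ K ∧ ∀ u v, ‖u - v‖ ≤ K * ‖A u - A v‖
  homog : ∀ t : ℝ, 0 < t → ∀ u, A (t • u) = t • A u
  add : ∀ u, ∀ v ∈ U, A (u + v) = A u + A v

/-- Bi-Lipschitz, positively homogeneous self-equivalence commuting with translations by `U`. -/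
structure NiceE (U : Submodule ℝ E) (F : E ≃ E) : Prop where
  lip : ∃ K : ℝ, 0 ≤ K ∧ ∀ u v, ‖F u - F v‖ ≤ K * ‖u - v‖
  lip_symm : ∃ K : ℝ, 0 ≤ K ∧ ∀ u v, ‖u - v‖ ≤ K * ‖F u - F v‖
  homog : ∀ t : ℝ, 0 < t → ∀ u, F (t • u) = t • F u
  add : ∀ u, ∀ v ∈ U, F (u + v) = F u + v

theorem homog_zero {f : E → X} (hf : ∀ t : ℝ, 0 < t → ∀ u, f (t • u) = t • f u) : f 0 = 0 := by
  have h := hf 2 (by norm_num) 0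
  rw [smul_zero, two_smul] at h
  simpa using h

theorem NiceE.symm {U : Submodule ℝ E} {F : E ≃ E} (h : NiceE U F) : NiceE U F.symm := by
  obtain ⟨K, hK0, hK⟩ := h.lip
  obtain ⟨K', hK0', hK'⟩ := h.lip_symm
  refine ⟨⟨K', hK0', fun u v => ?_⟩, ⟨K, hK0, fun u v => ?_⟩, fun t ht u => ?_, fun u v hv => ?_⟩
  · simpa using hK' (F.symm u) (F.symm v)
  · simpa using hK (F.symm u) (F.symm v)
  · apply F.injective; rw [h.homog t ht]; simp
  · apply F.injective; rw [h.add _ v hv]; simp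

theorem NiceE.trans {U : Submodule ℝ E} {F F' : E ≃ E} (h : NiceE U F) (h' : NiceE U F') :
    NiceE U (F.trans F') := by
  obtain ⟨K, hK0, hK⟩ := h.lip
  obtain ⟨L, hL0, hL⟩ := h.lip_symm
  obtain ⟨K', hK0', hK'⟩ := h'.lip
  obtain ⟨L', hL0', hL'⟩ := h'.lip_symm
  refine ⟨⟨K' * K, by positivity, fun u v => ?_⟩, ⟨L * L', by positivity, fun u v => ?_⟩,
    fun t ht u => ?_, fun u v hv => ?_⟩
  · rw [mul_assoc]; exact (hK' _ _).trans (mul_le_mul_of_nonneg_left (hK _ _) hK0')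
  · rw [mul_assoc]; exact (hL _ _).trans (mul_le_mul_of_nonneg_left (hL' _ _) hL0)
  · simp [h.homog t ht, h'.homog t ht]
  · simp [h.add _ v hv, h'.add _ v hv]

theorem NiceE.refl (U : Submodule ℝ E) : NiceE U (Equiv.refl E) :=
  ⟨⟨1, by simp, by simp⟩, ⟨1, by simp, by simp⟩, by simp, by simp⟩

theorem NiceA.comp {U : Submodule ℝ E} {F : E ≃ E} {A : E ≃ X} (h : NiceE U F) (h' : NiceA U A) :
    NiceA U (F.trans A) := by
  obtain ⟨K, hK0, hK⟩ := h.lip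
  obtain ⟨L, hL0, hL⟩ := h.lip_symm
  obtain ⟨K', hK'⟩ := h'.lip
  obtain ⟨L', hL0', hL'⟩ := h'.lip_symm
  have hF0 : F 0 = 0 := homog_zero h.homog
  refine ⟨⟨|K'| * K, fun u v => ?_⟩, ⟨L * L', by positivity, fun u v => ?_⟩,
    fun t ht u => ?_, fun u v hv => ?_⟩
  · rw [mul_assoc]
    refine (hK' _ _).trans ?_
    calc K' * ‖F u - F v‖ ≤ |K'| * ‖F u - F v‖ :=
          mul_le_mul_of_nonneg_right (le_abs_self _) (norm_nonneg _)
      _ ≤ _ := mul_le_mul_of_nonneg_left (hK _ _) (abs_nonneg _)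
  · rw [mul_assoc]; exact (hL _ _).trans (mul_le_mul_of_nonneg_left (hL' _ _) hL0)
  · simp [h.homog t ht, h'.homog t ht]
  · have := h.add 0 v hv
    rw [zero_add, hF0, zero_add] at this
    simp [h.add _ v hv, h'.add _ v hv, this]

/-- Equivalence of maps under nice self-equivalences. -/
def Rel (U : Submodule ℝ E) (h h' : E → Y) : Prop :=
  ∃ F : E ≃ E, NiceE U F ∧ ∀ u, h' (F u) = h u

theorem Rel.refl (U : Submodule ℝ E) (h : E → Y) : Rel U h h :=
  ⟨Equiv.refl E, NiceE.refl U, fun _ => rfl⟩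

theorem Rel.symm {U : Submodule ℝ E} {h h' : E → Y} (r : Rel U h h') : Rel U h' h := by
  obtain ⟨F, hF, e⟩ := r
  exact ⟨F.symm, hF.symm, fun u => by rw [← e]; simp⟩

theorem Rel.trans {U : Submodule ℝ E} {h h' h'' : E → Y} (r : Rel U h h') (r' : Rel U h' h'') :
    Rel U h h'' := by
  obtain ⟨F, hF, e⟩ := r
  obtain ⟨F', hF', e₂⟩ := r'
  refine ⟨F.trans F', hF.trans hF', fun u => ?_⟩
  simp only [Equiv.trans_apply, e₂, e]

/-- `h` is globally a nice trivial fibration. -/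
def Good (G : Type*) [NormedAddCommGroup G] [NormedSpace ℝ G] (U : Submodule ℝ E) (h : E → Y) :
    Prop :=
  ∃ A : E ≃ G × Y, NiceA U A ∧ ∀ u, (A u).2 = h u

theorem Good.of_rel {U : Submodule ℝ E} {h h' : E → Y} (r : Rel U h h') (g : Good G U h') :
    Good G U h := by
  obtain ⟨F, hF, e⟩ := r
  obtain ⟨A, hA, e'⟩ := g
  exact ⟨F.trans A, NiceA.comp hF hA, fun u => by simp [e', e]⟩

theorem perturb [CompleteSpace X] {U : Submodule ℝ E} {A : E ≃ X} (hA : NiceA U A) {K L : ℝ}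
    (hK0 : 0 ≤ K) (hK : ∀ u v, ‖u - v‖ ≤ K * ‖A u - A v‖) (hKL : K * L < 1)
    (η : E → X) (hη : ∀ u v, ‖η u - η v‖ ≤ L * ‖u - v‖) (hL0 : 0 ≤ L)
    (ηh : ∀ t : ℝ, 0 < t → ∀ u, η (t • u) = t • η u) (ηU : ∀ u, ∀ v ∈ U, η (u + v) = η u) :
    ∃ B : E ≃ X, NiceA U B ∧ ∀ u, B u = A u + η u := by
  have η0 : η 0 = 0 := homog_zero ηh
  have key : ∀ u v, ‖u - v‖ ≤ K / (1 - K * L) * ‖(A u + η u) - (A v + η v)‖ := by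
    intro u v
    have h1 := hK u v
    have h2 := hη u v
    have h3 : ‖A u - A v‖ ≤ ‖(A u + η u) - (A v + η v)‖ + ‖η u - η v‖ := by
      have : A u - A v = ((A u + η u) - (A v + η v)) - (η u - η v) := by abel
      rw [this]; exact norm_sub_le _ _
    rw [div_mul_eq_mul_div, le_div_iff₀ (by linarith)]
    have := mul_le_mul_of_nonneg_left (h3.trans (add_le_add_right h2 _)) hK0
    nlinarith
  have inj : Function.Injective (fun u => A u + η u) := by
    intro u v huv
    have := key u v
    simp only at huv
    rw [huv, sub_self, norm_zero, mul_zero] at this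
    exact sub_eq_zero.1 (norm_le_zero_iff.1 this)
  have surj : Function.Surjective (fun u => A u + η u) := by
    intro y
    have hc : ContractingWith (Real.toNNReal (K * L)) (fun x => y - η (A.symm x)) := by
      refine ⟨?_, ?_⟩
      · rw [← NNReal.coe_lt_coe, Real.coe_toNNReal _ (by positivity)]; simpa using hKL
      · refine LipschitzWith.of_dist_le_mul fun x x' => ?_
        rw [Real.coe_toNNReal _ (by positivity), dist_eq_norm, dist_eq_norm]
        have h1 := hη (A.symm x') (A.symm x)
        have h2 := hK (A.symm x') (A.symm x)
        simp only [Equiv.apply_symm_apply] at h2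
        have h3 : (y - η (A.symm x)) - (y - η (A.symm x')) = η (A.symm x') - η (A.symm x) := by abel
        rw [h3, norm_sub_rev x x']
        calc _ ≤ _ := h1
          _ ≤ L * (K * ‖x' - x‖) := mul_le_mul_of_nonneg_left h2 hL0
          _ = _ := by ring
    have hfix := hc.fixedPoint_isFixedPt
    set x := ContractingWith.fixedPoint _ hc
    refine ⟨A.symm x, ?_⟩
    have : y - η (A.symm x) = x := hfix
    simp only [Equiv.apply_symm_apply]
    exact (sub_eq_iff_eq_add.1 this).symm
  obtain ⟨B, hBe⟩ : ∃ B : E ≃ X, ∀ u, B u = A u + η u :=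
    ⟨Equiv.ofBijective _ (show Function.Bijective _ from ⟨inj, surj⟩), fun _ => rfl⟩
  refine ⟨B, ⟨?_, ⟨K / (1 - K * L), ?_, fun u v => by simpa only [hBe] using key u v⟩, ?_, ?_⟩, hBe⟩
  · obtain ⟨M, hM⟩ := hA.lip
    refine ⟨M + L, fun u v => ?_⟩
    have : (A u + η u) - (A v + η v) = (A u - A v) + (η u - η v) := by abel
    simp only [hBe]
    rw [this, add_mul]
    exact (norm_add_le _ _).trans (add_le_add (hM _ _) (hη _ _))
  · exact div_nonneg hK0 (by linarith)
  · intro t ht u; simp [hBe, hA.homog t ht, ηh t ht]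
  · intro u v hv
    have : η v = 0 := by have := ηU 0 v hv; rwa [zero_add, η0] at this
    simp only [hBe]
    rw [hA.add u v hv, ηU u v hv, this]; abel

theorem local_step [CompleteSpace G] [CompleteSpace Y] {U : Submodule ℝ E} {A : E ≃ G × Y}
    (hA : NiceA U A) {K L : ℝ}
    (hK0 : 0 ≤ K) (hK : ∀ u v, ‖u - v‖ ≤ K * ‖A u - A v‖) (hL0 : 0 ≤ L) (hKL : K * L < 1)
    (h : E → Y) (Ω : Set E) (hΩ : ∀ u ∈ Ω, (A u).2 = h u)
    (η θ : E → Y) (hη : ∀ u v, ‖η u - η v‖ ≤ L * ‖u - v‖)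
    (ηh : ∀ t : ℝ, 0 < t → ∀ u, η (t • u) = t • η u) (ηU : ∀ u, ∀ v ∈ U, η (u + v) = η u)
    (hθ : ∀ u v, ‖θ u - θ v‖ ≤ L * ‖u - v‖)
    (θh : ∀ t : ℝ, 0 < t → ∀ u, θ (t • u) = t • θ u) (θU : ∀ u, ∀ v ∈ U, θ (u + v) = θ u)
    (hoff : ∀ u, u ∉ Ω → η u = θ u) :
    Rel U (fun u => h u + η u) (fun u => h u + θ u) := by
  have mk : ∀ η : E → Y, (∀ u v, ‖η u - η v‖ ≤ L * ‖u - v‖) →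
      (∀ t : ℝ, 0 < t → ∀ u, η (t • u) = t • η u) → (∀ u, ∀ v ∈ U, η (u + v) = η u) →
      ∃ B : E ≃ G × Y, NiceA U B ∧ ∀ u, B u = A u + ((0 : G), η u) := by
    intro η hη ηh ηU
    refine perturb hA hK0 hK hKL (fun u => ((0 : G), η u)) ?_ hL0 ?_ ?_
    · intro u v; simpa [Prod.norm_def] using hη u v
    · intro t ht u; simp [ηh t ht]
    · intro u v hv; simp [ηU u v hv]
  obtain ⟨B, hB, eB⟩ := mk η hη ηh ηU
  obtain ⟨B', hB', eB'⟩ := mk θ hθ θh θU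
  have hv0 : ∀ v ∈ U, B v = B' v := by
    intro v hv
    have h1 := ηU 0 v hv
    have h2 := θU 0 v hv
    rw [zero_add, homog_zero ηh] at h1
    rw [zero_add, homog_zero θh] at h2
    rw [eB, eB', h1, h2]
  have hfix : ∀ u, u ∉ Ω → B'.symm (B u) = u := by
    intro u hu
    rw [Equiv.symm_apply_eq, eB, eB', hoff u hu]
  refine ⟨B.trans B'.symm, ⟨?_, ?_, ?_, ?_⟩, ?_⟩
  · obtain ⟨M, hM⟩ := hB.lip
    obtain ⟨M', hM0', hM'⟩ := hB'.lip_symm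
    refine ⟨M' * |M|, by positivity, fun u v => ?_⟩
    have h1 := hM' (B'.symm (B u)) (B'.symm (B v))
    simp only [Equiv.apply_symm_apply] at h1
    refine h1.trans ?_
    rw [mul_assoc]
    refine mul_le_mul_of_nonneg_left ((hM u v).trans ?_) hM0'
    exact mul_le_mul_of_nonneg_right (le_abs_self _) (norm_nonneg _)
  · obtain ⟨M, hM0, hM⟩ := hB.lip_symm
    obtain ⟨M', hM'⟩ := hB'.lip
    refine ⟨M * |M'|, by positivity, fun u v => ?_⟩
    have h1 := hM' (B'.symm (B u)) (B'.symm (B v))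
    simp only [Equiv.apply_symm_apply] at h1
    refine (hM u v).trans ?_
    rw [mul_assoc]
    refine mul_le_mul_of_nonneg_left (h1.trans ?_) hM0
    exact mul_le_mul_of_nonneg_right (le_abs_self _) (norm_nonneg _)
  · intro t ht u
    simp only [Equiv.trans_apply]
    rw [Equiv.symm_apply_eq, hB.homog t ht, hB'.homog t ht]; simp
  · intro u v hv
    simp only [Equiv.trans_apply]
    rw [Equiv.symm_apply_eq, hB.add u v hv, hB'.add _ v hv, hv0 v hv]; simp
  · intro u
    simp only [Equiv.trans_apply]
    by_cases hu : u ∈ Ω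
    · have hu' : B'.symm (B u) ∈ Ω := by
        by_contra hn
        have h1 := hfix _ hn
        have h2 : B'.symm (B u) = u := B.injective (B'.symm.injective h1)
        exact hn (by rw [h2]; exact hu)
      have h1 : B' (B'.symm (B u)) = B u := by simp
      generalize B'.symm (B u) = w at h1 hu' ⊢
      rw [eB', eB u] at h1
      have h2 := congrArg Prod.snd h1
      simp only [Prod.snd_add] at h2
      rwa [hΩ _ hu', hΩ u hu] at h2
    · rw [hfix u hu, hoff u hu]

end

end CommonTangents

namespace CommonTangents

section

open Filter Topology

variable {E X G Y : Type*} [NormedAddCommGroup E] [NormedSpace ℝ E]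
  [NormedAddCommGroup G] [NormedSpace ℝ G] [NormedAddCommGroup Y] [NormedSpace ℝ Y]

theorem quot_lip {g : E → Y} {φ Φ : E → ℝ} {a b K M : ℝ} (hM : 0 ≤ M)
    (h0 : ∀ u, 0 ≤ φ u) (h1 : ∀ u, φ u ≤ Φ u)
    (hφ : ∀ u v, |φ u - φ v| ≤ a * ‖u - v‖) (hΦ : ∀ u v, |Φ u - Φ v| ≤ b * ‖u - v‖)
    (hg : ∀ u v, ‖g u - g v‖ ≤ K * ‖u - v‖) (hgM : ∀ u, ‖g u‖ ≤ M * Φ u) (u v : E) :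
    ‖(φ u / Φ u) • g u - (φ v / Φ v) • g v‖ ≤ (K + M * (a + b)) * ‖u - v‖ := by
  have hq : ∀ u, φ u / Φ u * Φ u = φ u := by
    intro u
    by_cases hz : Φ u = 0
    · have : φ u = 0 := le_antisymm (hz ▸ h1 u) (h0 u)
      simp [this]
    · field_simp
  have hq0 : ∀ u, 0 ≤ φ u / Φ u := fun u => div_nonneg (h0 u) ((h0 u).trans (h1 u))
  have hq1 : ∀ u, φ u / Φ u ≤ 1 := fun u => div_le_one_of_le₀ (h1 u) ((h0 u).trans (h1 u))
  have e : (φ u / Φ u) • g u - (φ v / Φ v) • g v =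
      (φ u / Φ u) • (g u - g v) + (φ u / Φ u - φ v / Φ v) • g v := by
    rw [smul_sub, sub_smul]; abel
  have hv := hq v
  have hu := hq u
  have hu0 := hq0 u
  have hu1 := hq1 u
  generalize φ u / Φ u = p at *
  generalize φ v / Φ v = q at *
  rw [e]
  have hΦ0 : 0 ≤ Φ v := (h0 v).trans (h1 v)
  have A1 : ‖p • (g u - g v)‖ ≤ K * ‖u - v‖ := by
    rw [norm_smul, Real.norm_of_nonneg hu0]
    exact (mul_le_of_le_one_left (norm_nonneg _) hu1).trans (hg u v)
  have A3 : |p - q| * Φ v ≤ (a + b) * ‖u - v‖ := by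
    have : (p - q) * Φ v = (φ u - φ v) - p * (Φ u - Φ v) := by
      rw [← hv, ← hu]; ring
    rw [← abs_of_nonneg hΦ0, ← abs_mul, this, add_mul]
    refine (abs_sub _ _).trans (add_le_add (hφ u v) ?_)
    rw [abs_mul, abs_of_nonneg hu0]
    exact (mul_le_of_le_one_left (abs_nonneg _) hu1).trans (hΦ u v)
  have A2 : ‖(p - q) • g v‖ ≤ M * (a + b) * ‖u - v‖ := by
    rw [norm_smul, Real.norm_eq_abs]
    calc |p - q| * ‖g v‖ ≤ |p - q| * (M * Φ v) :=
          mul_le_mul_of_nonneg_left (hgM v) (abs_nonneg _)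
      _ = M * (|p - q| * Φ v) := by ring
      _ ≤ M * ((a + b) * ‖u - v‖) := mul_le_mul_of_nonneg_left A3 hM
      _ = _ := by ring
  rw [add_mul]
  exact (norm_add_le _ _).trans (add_le_add A1 A2)

theorem bump_lip (π : E →L[ℝ] E) (r : ℝ) (hr : 0 ≤ r) (y : E) :
    ∃ a : ℝ, 0 ≤ a ∧ ∀ u v, |max 0 (r * ‖π u‖ - ‖π u - ‖π u‖ • y‖) -
      max 0 (r * ‖π v‖ - ‖π v - ‖π v‖ • y‖)| ≤ a * ‖u - v‖ := by
  refine ⟨(r + (1 + ‖y‖)) * ‖π‖, by positivity, fun u v => ?_⟩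
  have h0 : ‖π u - π v‖ ≤ ‖π‖ * ‖u - v‖ := by rw [← map_sub]; exact π.le_opNorm _
  have h1 : |‖π u‖ - ‖π v‖| ≤ ‖π u - π v‖ := abs_norm_sub_norm_le _ _
  have h2 : |‖π u - ‖π u‖ • y‖ - ‖π v - ‖π v‖ • y‖| ≤ (1 + ‖y‖) * ‖π u - π v‖ := by
    refine (abs_norm_sub_norm_le _ _).trans ?_
    have : π u - ‖π u‖ • y - (π v - ‖π v‖ • y) = (π u - π v) - (‖π u‖ - ‖π v‖) • y := by
      rw [sub_smul]; abel
    rw [this]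
    refine (norm_sub_le _ _).trans ?_
    rw [norm_smul, Real.norm_eq_abs]
    nlinarith [norm_nonneg y]
  rw [max_comm 0, max_comm 0]
  refine (abs_max_sub_max_le_abs _ _ _).trans ?_
  have : r * ‖π u‖ - ‖π u - ‖π u‖ • y‖ - (r * ‖π v‖ - ‖π v - ‖π v‖ • y‖) =
    r * (‖π u‖ - ‖π v‖) - (‖π u - ‖π u‖ • y‖ - ‖π v - ‖π v‖ • y‖) := by ring
  rw [this]
  refine (abs_sub _ _).trans ?_
  rw [abs_mul, abs_of_nonneg hr]
  calc _ ≤ r * ‖π u - π v‖ + (1 + ‖y‖) * ‖π u - π v‖ :=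
        add_le_add (mul_le_mul_of_nonneg_left h1 hr) h2
    _ = (r + (1 + ‖y‖)) * ‖π u - π v‖ := by ring
    _ ≤ (r + (1 + ‖y‖)) * (‖π‖ * ‖u - v‖) := mul_le_mul_of_nonneg_left h0 (by positivity)
    _ = _ := by ring

theorem main_step [FiniteDimensional ℝ E] [CompleteSpace G] [CompleteSpace Y] {U : Submodule ℝ E}
    (h : E → Y) (hh : ∀ t : ℝ, 0 < t → ∀ u, h (t • u) = t • h u)
    (hU : ∀ u, ∀ v ∈ U, h (u + v) = h u + h v)
    (hloc : ∀ y, y ∉ U → ∃ r : ℝ, 0 < r ∧ ∃ A : E ≃ G × Y, NiceA U A ∧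
      (∀ u, ‖u - y‖ < r → (A u).2 = h u) ∧ ∀ v ∈ U, (A v).2 = h v)
    (g : E → Y) {Kg : ℝ} (hKg : 0 ≤ Kg) (hg : ∀ u v, ‖g u - g v‖ ≤ Kg * ‖u - v‖)
    (gh : ∀ t : ℝ, 0 < t → ∀ u, g (t • u) = t • g u) (gU : ∀ u, ∀ v ∈ U, g (u + v) = g u) :
    ∃ ε : ℝ, 0 < ε ∧ ∀ s : ℝ, |s| < ε → Rel U h (fun u => h u + s • g u) := by
  haveI : ProperSpace E := FiniteDimensional.proper ℝ E
  -- projection along U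
  obtain ⟨π, hπ0, hπU⟩ : ∃ π : E →L[ℝ] E, (∀ v ∈ U, π v = 0) ∧ ∀ u, u - π u ∈ U := by
    obtain ⟨q, hq⟩ := (Submodule.ClosedComplemented.of_finiteDimensional U : U.ClosedComplemented)
    refine ⟨ContinuousLinearMap.id ℝ E - U.subtypeL.comp q, ?_, ?_⟩
    · intro v hv
      have := hq ⟨v, hv⟩
      simp [this]
    · intro u
      simp
  have hππ : ∀ u, π (π u) = π u := by
    intro u
    have := hπ0 _ (hπU u)
    rw [map_sub, sub_eq_zero] at this
    exact this.symm
  have hloc' : ∀ y, ∃ r : ℝ, 0 < r ∧ ∃ K : ℝ, 0 ≤ K ∧ (y ∉ U → ∃ A : E ≃ G × Y, NiceA U A ∧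
      (∀ u v, ‖u - v‖ ≤ K * ‖A u - A v‖) ∧
      (∀ u, ‖u - y‖ < r → (A u).2 = h u) ∧ ∀ v ∈ U, (A v).2 = h v) := by
    intro y
    by_cases hy : y ∈ U
    · exact ⟨1, one_pos, 0, le_rfl, fun h => absurd hy h⟩
    · obtain ⟨r, hr, A, hA, h1, h2⟩ := hloc y hy
      obtain ⟨K, hK0, hK⟩ := hA.lip_symm
      exact ⟨r, hr, K, hK0, fun _ => ⟨A, hA, hK, h1, h2⟩⟩
  choose r hr K hK0 hA using hloc'
  set S : Set E := {y | π y = y} ∩ Metric.sphere 0 1 with hS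
  have hSc : IsCompact S :=
    (isCompact_sphere _ _).inter_left (isClosed_eq π.continuous continuous_id)
  have hSU : ∀ y ∈ S, y ∉ U := by
    rintro y ⟨h1, h2⟩ hy
    have : y = 0 := by rw [← (show π y = y from h1), hπ0 y hy]
    simp [this] at h2
  obtain ⟨t, htS, htc⟩ := hSc.elim_nhds_subcover (fun y => Metric.ball y (r y))
    (fun y _ => Metric.ball_mem_nhds y (hr y))
  let φ : E → E → ℝ := fun y u => max 0 (r y * ‖π u‖ - ‖π u - ‖π u‖ • y‖)
  have φ0 : ∀ y u, 0 ≤ φ y u := fun y u => le_max_left _ _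
  have φlip : ∀ y, ∃ a : ℝ, 0 ≤ a ∧ ∀ u v, |φ y u - φ y v| ≤ a * ‖u - v‖ :=
    fun y => bump_lip π (r y) (hr y).le y
  choose a ha0 ha using φlip
  have φh : ∀ y, ∀ s : ℝ, 0 < s → ∀ u, φ y (s • u) = s * φ y u := by
    intro y s hs u
    have e1 : ‖s • π u‖ = s * ‖π u‖ := by rw [norm_smul, Real.norm_of_nonneg hs.le]
    have e2 : ‖s • π u - (s * ‖π u‖) • y‖ = s * ‖π u - ‖π u‖ • y‖ := by
      rw [mul_smul, ← smul_sub, norm_smul, Real.norm_of_nonneg hs.le]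
    simp only [φ, map_smul, e1, e2]
    rw [mul_max_of_nonneg _ _ hs.le, mul_zero]
    congr 1; ring
  have φU : ∀ y u, ∀ v ∈ U, φ y (u + v) = φ y u := by
    intro y u v hv
    simp only [φ, map_add, hπ0 v hv, add_zero]
  let ψ : Finset E → E → ℝ := fun t' u => ∑ y ∈ t', φ y u
  have ψ0 : ∀ t' u, 0 ≤ ψ t' u := fun t' u => Finset.sum_nonneg fun y _ => φ0 y u
  have ψle : ∀ t' ⊆ t, ∀ u, ψ t' u ≤ ψ t u := fun t' ht' u =>
    Finset.sum_le_sum_of_subset_of_nonneg ht' fun y _ _ => φ0 y u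
  let a' : ℝ := ∑ y ∈ t, a y
  have ha'0 : 0 ≤ a' := Finset.sum_nonneg fun y _ => ha0 y
  have ψlip : ∀ t' ⊆ t, ∀ u v, |ψ t' u - ψ t' v| ≤ a' * ‖u - v‖ := by
    intro t' ht' u v
    simp only [ψ, ← Finset.sum_sub_distrib]
    refine (Finset.abs_sum_le_sum_abs _ _).trans ?_
    refine (Finset.sum_le_sum fun y _ => ha y u v).trans ?_
    rw [← Finset.sum_mul]
    refine mul_le_mul_of_nonneg_right ?_ (norm_nonneg _)
    exact Finset.sum_le_sum_of_subset_of_nonneg ht' fun y _ _ => ha0 y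
  have ψh : ∀ t', ∀ s : ℝ, 0 < s → ∀ u, ψ t' (s • u) = s * ψ t' u := by
    intro t' s hs u
    simp only [ψ, Finset.mul_sum, φh _ s hs]
  have ψU : ∀ t' u, ∀ v ∈ U, ψ t' (u + v) = ψ t' u := by
    intro t' u v hv
    simp only [ψ, φU _ u v hv]
  have ψcont : Continuous (ψ t) := by
    simp only [ψ, φ]; fun_prop
  have ψpos : ∀ x ∈ S, 0 < ψ t x := by
    intro x hx
    obtain ⟨y, hy, hxy⟩ := Set.mem_iUnion₂.1 (htc hx)
    refine Finset.sum_pos' (fun y _ => φ0 y x) ⟨y, hy, ?_⟩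
    have h1 : π x = x := hx.1
    have h2 : ‖x‖ = 1 := by simpa using hx.2
    refine lt_max_of_lt_right ?_
    rw [h1, h2, one_smul, mul_one, ← dist_eq_norm]
    exact sub_pos.2 hxy
  obtain ⟨c, hc, hcS⟩ := hSc.exists_forall_le' ψcont.continuousOn ψpos
  have ψπ : ∀ u, ψ t u = ψ t (π u) := by
    intro u
    have := ψU t (π u) _ (hπU u)
    rw [← this]; congr 1; abel
  have ψc : ∀ u, c * ‖π u‖ ≤ ψ t u := by
    intro u
    by_cases hz : π u = 0
    · rw [hz, norm_zero, mul_zero]; exact ψ0 t u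
    · have hn : 0 < ‖π u‖ := norm_pos_iff.2 hz
      have hm : ‖π u‖⁻¹ • π u ∈ S := by
        refine ⟨?_, ?_⟩
        · simp [hππ]
        · simp [norm_smul, hn.ne']
      have := hcS _ hm
      rw [ψh t _ (inv_pos.2 hn), ← ψπ, inv_mul_eq_div, le_div_iff₀ hn] at this
      exact this
  have gM : ∀ u, ‖g u‖ ≤ Kg / c * ψ t u := by
    intro u
    have e : g u = g (π u) := by
      have := gU (π u) _ (hπU u)
      rw [← this]; congr 1; abel
    have h1 := hg (π u) 0
    rw [homog_zero gh, sub_zero, sub_zero] at h1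
    rw [e]
    refine h1.trans ?_
    rw [div_mul_eq_mul_div, le_div_iff₀ hc]
    have := mul_le_mul_of_nonneg_left (ψc u) hKg
    linarith
  have hM0 : 0 ≤ Kg / c := by positivity
  set B : ℝ := Kg + Kg / c * (a' + a') with hB
  have hB0 : 0 ≤ B := by positivity
  let G' : Finset E → E → Y := fun t' u => (ψ t' u / ψ t u) • g u
  have Glip : ∀ t' ⊆ t, ∀ u v, ‖G' t' u - G' t' v‖ ≤ B * ‖u - v‖ := fun t' ht' u v =>
    quot_lip hM0 (ψ0 t') (ψle t' ht') (ψlip t' ht') (ψlip t subset_rfl) hg gM u v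
  have Gh : ∀ t', ∀ s : ℝ, 0 < s → ∀ u, G' t' (s • u) = s • G' t' u := by
    intro t' s hs u
    simp only [G', ψh _ s hs, gh s hs, mul_div_mul_left _ _ hs.ne']
    rw [smul_comm]
  have GU : ∀ t' u, ∀ v ∈ U, G' t' (u + v) = G' t' u := by
    intro t' u v hv
    simp only [G', ψU _ u v hv, gU u v hv]
  have Gt : ∀ u, G' t u = g u := by
    intro u
    by_cases hz : ψ t u = 0
    · have := gM u
      rw [hz, mul_zero] at this
      simp [G', norm_le_zero_iff.1 this]
    · simp [G', div_self hz]
  set KK : ℝ := ∑ y ∈ t, K y with hKK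
  have hKK0 : 0 ≤ KK := Finset.sum_nonneg fun y _ => hK0 y
  refine ⟨1 / (KK * B + 1), by positivity, fun s hs => ?_⟩
  have hsB : ∀ y ∈ t, K y * (|s| * B) < 1 := by
    intro y hy
    have h1 : K y ≤ KK := Finset.single_le_sum (fun y _ => hK0 y) hy
    rw [lt_div_iff₀ (by positivity)] at hs
    have h2 : K y * (|s| * B) ≤ KK * (|s| * B) := mul_le_mul_of_nonneg_right h1 (by positivity)
    by_cases hs0 : |s| = 0
    · simp [hs0]
    · have : 0 < |s| := lt_of_le_of_ne (abs_nonneg _) (Ne.symm hs0)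
      nlinarith
  have sl : ∀ t' ⊆ t, ∀ u v, ‖s • G' t' u - s • G' t' v‖ ≤ |s| * B * ‖u - v‖ := by
    intro t' ht' u v
    rw [← smul_sub, norm_smul, Real.norm_eq_abs, mul_assoc]
    exact mul_le_mul_of_nonneg_left (Glip t' ht' u v) (abs_nonneg _)
  have sh : ∀ t', ∀ q : ℝ, 0 < q → ∀ u, s • G' t' (q • u) = q • s • G' t' u := by
    intro t' q hq u
    rw [Gh t' q hq, smul_comm]
  have sU : ∀ t' u, ∀ v ∈ U, s • G' t' (u + v) = s • G' t' u := by
    intro t' u v hv; rw [GU t' u v hv]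
  have ind : ∀ t' : Finset E, t' ⊆ t → Rel U h (fun u => h u + s • G' t' u) := by
    classical
    intro t'
    induction t' using Finset.induction_on with
    | empty =>
      intro _
      have : (fun u => h u + s • G' ∅ u) = h := by
        funext u; simp [G', ψ]
      rw [this]; exact Rel.refl U h
    | insert y t' hy ih =>
      intro hsub
      have hyt : y ∈ t := hsub (Finset.mem_insert_self _ _)
      have ht' : t' ⊆ t := fun z hz => hsub (Finset.mem_insert_of_mem hz)
      refine (ih ht').trans ?_
      obtain ⟨A, hA1, hA2, hA3, hA4⟩ := hA y (hSU y (htS y hyt))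
      refine local_step hA1 (hK0 y) hA2 (by positivity) (hsB y hyt) h {u | 0 < φ y u} ?_
        (fun u => s • G' t' u) (fun u => s • G' (insert y t') u) (sl t' ht') (sh t') (sU t')
        (sl _ hsub) (sh _) (sU _) ?_
      · intro u hu
        have hu1 : 0 < r y * ‖π u‖ - ‖π u - ‖π u‖ • y‖ := by
          rcases lt_max_iff.1 (show 0 < max 0 (r y * ‖π u‖ - ‖π u - ‖π u‖ • y‖) from hu) with h | h
          · exact absurd h (lt_irrefl _)
          · exact h
        have hn : 0 < ‖π u‖ := by
          by_contra hcon
          have : ‖π u‖ = 0 := le_antisymm (not_lt.1 hcon) (norm_nonneg _)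
          rw [this] at hu1
          have := norm_nonneg (π u - (0:ℝ) • y)
          linarith
        have h1 : ‖‖π u‖⁻¹ • π u - y‖ < r y := by
          have e : ‖π u‖⁻¹ • π u - y = ‖π u‖⁻¹ • (π u - ‖π u‖ • y) := by
            rw [smul_sub, smul_smul, inv_mul_cancel₀ hn.ne', one_smul]
          rw [e, norm_smul, norm_inv, norm_norm, inv_mul_eq_div, div_lt_iff₀ hn]
          linarith
        have h2 := hA3 _ h1
        rw [hA1.homog _ (inv_pos.2 hn), hh _ (inv_pos.2 hn), Prod.smul_snd] at h2
        have h3 : (A (π u)).2 = h (π u) := smul_right_injective Y (inv_pos.2 hn).ne' h2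
        have e : u = π u + (u - π u) := by abel
        rw [e, hA1.add _ _ (hπU u), hU _ _ (hπU u), Prod.snd_add, h3, hA4 _ (hπU u)]
      · intro u hu
        have : φ y u = 0 := le_antisymm (not_lt.1 hu) (φ0 y u)
        simp only [G', ψ, Finset.sum_insert hy, this, zero_add]
  have := ind t subset_rfl
  simpa only [Gt] using this

end

end CommonTangents

namespace CommonTangents

section

open Filter Topology

variable {E G : Type*} [NormedAddCommGroup E] [NormedSpace ℝ E]
  [NormedAddCommGroup G] [NormedSpace ℝ G] {N : ℕ}

/-- `h` is the (concave) support function of the family. -/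
def Supp (V : Fin N → Set (E →L[ℝ] ℝ)) (h : E → Fin N → ℝ) : Prop :=
  ∀ u i, IsLeast ((fun f : E →L[ℝ] ℝ => f u) '' V i) (h u i)

/-- Transversals of the convex hulls are linearly independent. -/
def Indep (V : Fin N → Set (E →L[ℝ] ℝ)) : Prop :=
  ∀ x : Fin N → E →L[ℝ] ℝ, (∀ i, x i ∈ convexHull ℝ (V i)) → LinearIndependent ℝ x

/-- The members of each family agree along `U`. -/
def Agree (U : Submodule ℝ E) (V : Fin N → Set (E →L[ℝ] ℝ)) : Prop :=
  ∀ i, ∀ f ∈ V i, ∀ f' ∈ V i, ∀ v ∈ U, f v = f' v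

theorem Supp.exists {V : Fin N → Set (E →L[ℝ] ℝ)} (hf : ∀ i, (V i).Finite)
    (hn : ∀ i, (V i).Nonempty) : ∃ h, Supp V h := by
  have : ∀ u i, ∃ c, IsLeast ((fun f : E →L[ℝ] ℝ => f u) '' V i) c := by
    intro u i
    obtain ⟨f, hf, hmin⟩ := Set.exists_min_image (V i) (fun f : E →L[ℝ] ℝ => f u) (hf i) (hn i)
    refine ⟨f u, ⟨f, hf, rfl⟩, ?_⟩
    rintro _ ⟨f', hf', rfl⟩
    exact hmin f' hf'
  choose h hh using this
  exact ⟨h, hh⟩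

theorem Supp.nonempty {V : Fin N → Set (E →L[ℝ] ℝ)} {h : E → Fin N → ℝ} (hs : Supp V h) (i : Fin N) :
    (V i).Nonempty := by
  obtain ⟨f, hf, -⟩ := (hs 0 i).1
  exact ⟨f, hf⟩

theorem Supp.le {V : Fin N → Set (E →L[ℝ] ℝ)} {h : E → Fin N → ℝ} (hs : Supp V h) (u : E) {i : Fin N}
    {f : E →L[ℝ] ℝ} (hf : f ∈ V i) : h u i ≤ f u :=
  (hs u i).2 ⟨f, hf, rfl⟩

theorem Supp.homog {V : Fin N → Set (E →L[ℝ] ℝ)} {h : E → Fin N → ℝ} (hs : Supp V h) (t : ℝ)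
    (ht : 0 < t) (u : E) : h (t • u) = t • h u := by
  funext i
  refine (hs (t • u) i).unique ?_
  obtain ⟨f, hf, e⟩ := (hs u i).1
  refine ⟨⟨f, hf, ?_⟩, ?_⟩
  · simp only at e
    simp [e]
  · rintro _ ⟨f', hf', rfl⟩
    have := hs.le u hf'
    simp only [map_smul, smul_eq_mul, Pi.smul_apply]
    exact mul_le_mul_of_nonneg_left this ht.le

theorem Supp.eq_of_mem {V : Fin N → Set (E →L[ℝ] ℝ)} {h : E → Fin N → ℝ} (hs : Supp V h)
    {U : Submodule ℝ E} (hU : Agree U V) {v : E} (hv : v ∈ U) {i : Fin N} {f : E →L[ℝ] ℝ}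
    (hf : f ∈ V i) : h v i = f v := by
  obtain ⟨f', hf', e⟩ := (hs v i).1
  rw [← e]; exact hU i f' hf' f hf v hv

theorem Supp.add {V : Fin N → Set (E →L[ℝ] ℝ)} {h : E → Fin N → ℝ} (hs : Supp V h)
    {U : Submodule ℝ E} (hU : Agree U V) (u : E) (v : E) (hv : v ∈ U) :
    h (u + v) = h u + h v := by
  funext i
  refine (hs (u + v) i).unique ?_
  obtain ⟨f, hf, e⟩ := (hs u i).1
  refine ⟨⟨f, hf, ?_⟩, ?_⟩
  · simp only at e
    simp [e, hs.eq_of_mem hU hv hf]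
  · rintro _ ⟨f', hf', rfl⟩
    have := hs.le u hf'
    simp only [map_add, Pi.add_apply]
    rw [hs.eq_of_mem hU hv hf']
    linarith

theorem Supp.lip {V : Fin N → Set (E →L[ℝ] ℝ)} {h : E → Fin N → ℝ} (hs : Supp V h)
    (hf : ∀ i, (V i).Finite) : ∃ C : ℝ, 0 ≤ C ∧ ∀ u v, ‖h u - h v‖ ≤ C * ‖u - v‖ := by
  obtain ⟨C, hC⟩ : ∃ C : ℝ, ∀ f ∈ ⋃ i, V i, ‖f‖ ≤ C := by
    obtain ⟨C, hC⟩ := ((Set.finite_iUnion hf).image (fun f => ‖f‖)).bddAbove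
    exact ⟨C, fun f hf => hC ⟨f, hf, rfl⟩⟩
  have key : ∀ u v i, h u i - h v i ≤ |C| * ‖u - v‖ := by
    intro u v i
    obtain ⟨f, hf, e⟩ := (hs v i).1
    have h1 := hs.le u hf
    simp only at e
    rw [← e]
    have h2 : f u - f v ≤ ‖f‖ * ‖u - v‖ := by
      rw [← map_sub]; exact (le_abs_self _).trans (f.le_opNorm _)
    have h3 := hC f (Set.mem_iUnion.2 ⟨i, hf⟩)
    have h4 := mul_le_mul_of_nonneg_right (h3.trans (le_abs_self C)) (norm_nonneg (u - v))
    linarith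
  refine ⟨|C|, abs_nonneg _, fun u v => ?_⟩
  rw [pi_norm_le_iff_of_nonneg (by positivity)]
  intro i
  rw [Pi.sub_apply, Real.norm_eq_abs, abs_le]
  have h1 := key u v i
  have h2 := key v u i
  rw [norm_sub_rev v u] at h2
  constructor <;> linarith

theorem Supp.local_eq {V : Fin N → Set (E →L[ℝ] ℝ)} {h h' : E → Fin N → ℝ} (hs : Supp V h)
    (hf : ∀ i, (V i).Finite) (y : E) (hs' : Supp (fun i => {f ∈ V i | f y = h y i}) h') :
    ∃ r : ℝ, 0 < r ∧ ∀ u, ‖u - y‖ < r → h' u = h u := by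
  have hy : ∀ i, h' y i = h y i := by
    intro i
    obtain ⟨f, hf, e⟩ := (hs' y i).1
    rw [← e]; exact hf.2
  have hc : Continuous h' := by
    obtain ⟨C, hC0, hC⟩ := hs'.lip (fun i => (hf i).subset (Set.sep_subset _ _))
    exact (LipschitzWith.of_dist_le_mul (K := ⟨C, hC0⟩) (fun u v => by
      rw [dist_eq_norm, dist_eq_norm]; exact hC u v)).continuous
  have ev : ∀ᶠ u in 𝓝 y, ∀ i, ∀ f ∈ V i, f y ≠ h y i → h' u i < f u := by
    rw [eventually_all]
    intro i
    rw [(hf i).eventually_all]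
    intro f hfV
    by_cases hfy : f y = h y i
    · simp [hfy]
    · have h1 : h' y i < f y := by
        rw [hy]; exact lt_of_le_of_ne (hs.le y hfV) (Ne.symm hfy)
      have h2 : Continuous fun u => h' u i := (continuous_apply i).comp hc
      filter_upwards [h2.continuousAt.eventually_lt f.continuous.continuousAt h1] with u hu _
      exact hu
  obtain ⟨r, hr, hb⟩ := Metric.eventually_nhds_iff.1 ev
  refine ⟨r, hr, fun u hu => ?_⟩
  have hu' := hb (by rwa [dist_eq_norm])
  funext i
  refine IsLeast.unique ?_ (hs u i)
  refine ⟨?_, ?_⟩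
  · obtain ⟨f, hf, e⟩ := (hs' u i).1
    exact ⟨f, hf.1, e⟩
  · rintro _ ⟨f, hfV, rfl⟩
    by_cases hfy : f y = h y i
    · exact hs'.le u ⟨hfV, hfy⟩
    · exact (hu' i f hfV hfy).le

theorem good_linear [FiniteDimensional ℝ E] [FiniteDimensional ℝ G]
    (hd : Module.finrank ℝ E = Module.finrank ℝ G + N) (U : Submodule ℝ E)
    (p : Fin N → E →L[ℝ] ℝ) (hp : LinearIndependent ℝ p) :
    Good G U (fun u i => p i u) := by
  let L : E →ₗ[ℝ] (Fin N → ℝ) := LinearMap.pi fun i => (p i : E →ₗ[ℝ] ℝ)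
  have hL : Function.Surjective L := by
    rw [← LinearMap.range_eq_top]
    by_contra hne
    obtain ⟨f, hf0, hf⟩ := Submodule.exists_le_ker_of_lt_top _ (lt_top_iff_ne_top.2 hne)
    apply hf0
    have hz : ∑ i, f (Pi.single i 1) • p i = 0 := by
      ext u
      have h1 : f (L u) = 0 := hf ⟨u, rfl⟩
      have h2 : L u = ∑ i, (p i u) • (Pi.single i (1:ℝ) : Fin N → ℝ) := by
        funext j
        simp [L, Finset.sum_apply, Pi.single_apply]
      rw [h2, map_sum] at h1
      simp only [map_smul, smul_eq_mul] at h1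
      simp only [_root_.sum_apply, _root_.smul_apply, smul_eq_mul,
        _root_.zero_apply]
      rw [← h1]
      exact Finset.sum_congr rfl fun i _ => mul_comm _ _
    have hz' := Fintype.linearIndependent_iff.1 hp _ hz
    refine LinearMap.pi_ext' fun i => LinearMap.ext_ring ?_
    simpa using hz' i
  have hker : Module.finrank ℝ (LinearMap.ker L) = Module.finrank ℝ G := by
    have h1 := LinearMap.finrank_range_add_finrank_ker L
    rw [LinearMap.range_eq_top.2 hL, finrank_top, Module.finrank_fin_fun] at h1
    omega
  let e : LinearMap.ker L ≃ₗ[ℝ] G := LinearEquiv.ofFinrankEq _ _ hker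
  obtain ⟨q, hq⟩ := LinearMap.exists_leftInverse_of_injective (LinearMap.ker L).subtype
    (LinearMap.ker_eq_bot.2 (Submodule.injective_subtype _))
  let M : E →ₗ[ℝ] G × (Fin N → ℝ) := (e.toLinearMap.comp q).prod L
  have hM : Function.Injective M := by
    rw [← LinearMap.ker_eq_bot, LinearMap.ker_eq_bot']
    intro u hu
    have h1 : e (q u) = 0 := congrArg Prod.fst hu
    have h2 : L u = 0 := congrArg Prod.snd hu
    have h3 : q u = ⟨u, h2⟩ := LinearMap.congr_fun hq ⟨u, h2⟩
    rw [h3] at h1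
    have := (LinearEquiv.map_eq_zero_iff e).1 h1
    exact congrArg Subtype.val this
  let M' : E ≃L[ℝ] G × (Fin N → ℝ) := (LinearEquiv.ofInjectiveOfFinrankEq M hM (by
    rw [hd, Module.finrank_prod, Module.finrank_fin_fun])).toContinuousLinearEquiv
  have hM' : ∀ u, M' u = M u := fun u => rfl
  refine ⟨M'.toEquiv, ⟨?_, ?_, ?_, ?_⟩, ?_⟩
  · refine ⟨‖(M' : E →L[ℝ] G × (Fin N → ℝ))‖, fun u v => ?_⟩
    have := (M' : E →L[ℝ] G × (Fin N → ℝ)).le_opNorm (u - v)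
    rw [map_sub] at this
    exact this
  · refine ⟨‖(M'.symm : G × (Fin N → ℝ) →L[ℝ] E)‖, norm_nonneg _, fun u v => ?_⟩
    have := (M'.symm : G × (Fin N → ℝ) →L[ℝ] E).le_opNorm (M' u - M' v)
    rw [map_sub] at this
    simpa using this
  · intro t _ u
    exact map_smul M' t u
  · intro u v _
    exact map_add M' u v
  · intro u
    rfl

theorem NiceA.mono {X : Type*} [NormedAddCommGroup X] [NormedSpace ℝ X] {U U' : Submodule ℝ E}
    {A : E ≃ X} (h : NiceA U' A) (hU : U ≤ U') : NiceA U A :=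
  ⟨h.lip, h.lip_symm, h.homog, fun u v hv => h.add u v (hU hv)⟩

theorem claim [FiniteDimensional ℝ E] [FiniteDimensional ℝ G]
    (hd : Module.finrank ℝ E = Module.finrank ℝ G + N) (n : ℕ) :
    ∀ (U : Submodule ℝ E) (V : Fin N → Set (E →L[ℝ] ℝ)) (h : E → Fin N → ℝ),
      Module.finrank ℝ E - Module.finrank ℝ U = n → (∀ i, (V i).Finite) → Supp V h → Indep V →
      Agree U V → Good G U h := by
  haveI : CompleteSpace G := FiniteDimensional.complete ℝ G
  induction n using Nat.strong_induction_on with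
  | _ n IH =>
  intro U V h hn hfin hs hind hag
  have hloc : ∀ (V : Fin N → Set (E →L[ℝ] ℝ)) (h : E → Fin N → ℝ), (∀ i, (V i).Finite) →
      Supp V h → Indep V → Agree U V → ∀ y, y ∉ U → ∃ r : ℝ, 0 < r ∧
      ∃ A : E ≃ G × (Fin N → ℝ), NiceA U A ∧
      (∀ u, ‖u - y‖ < r → (A u).2 = h u) ∧ ∀ v ∈ U, (A v).2 = h v := by
    intro V h hfin hs hind hag y hy
    let F : Fin N → Set (E →L[ℝ] ℝ) := fun i => {f ∈ V i | f y = h y i}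
    have hFV : ∀ i, F i ⊆ V i := fun i => Set.sep_subset _ _
    have hFn : ∀ i, (F i).Nonempty := by
      intro i
      obtain ⟨f, hf, e⟩ := (hs y i).1
      exact ⟨f, hf, e⟩
    have hFf : ∀ i, (F i).Finite := fun i => (hfin i).subset (hFV i)
    obtain ⟨h', hs'⟩ := Supp.exists hFf hFn
    have hFi : Indep F := fun x hx => hind x fun i => convexHull_mono (hFV i) (hx i)
    have hFa : Agree (U ⊔ Submodule.span ℝ {y}) F := by
      intro i f hf f' hf' v hv
      have : U ⊔ Submodule.span ℝ {y} ≤ LinearMap.ker ((f - f' : E →L[ℝ] ℝ) : E →ₗ[ℝ] ℝ) := by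
        refine sup_le ?_ ?_
        · intro w hw
          simp [hag i f hf.1 f' hf'.1 w hw]
        · rw [Submodule.span_singleton_le_iff_mem]
          simp [hf.2, hf'.2]
      have := this hv
      simpa [sub_eq_zero] using this
    have hlt : U < U ⊔ Submodule.span ℝ {y} := by
      refine lt_of_le_of_ne le_sup_left fun he => hy ?_
      rw [he]
      exact Submodule.mem_sup_right (Submodule.mem_span_singleton_self y)
    have h1 := Submodule.finrank_lt_finrank_of_lt hlt
    have h2 := Submodule.finrank_le (U ⊔ Submodule.span ℝ {y})
    obtain ⟨A, hA, e⟩ := IH _ (by omega) _ F h' rfl hFf hs' hFi hFa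
    obtain ⟨r, hr, hloc⟩ := hs.local_eq hfin y hs'
    refine ⟨r, hr, A, hA.mono le_sup_left, fun u hu => by rw [e, hloc u hu], fun v hv => ?_⟩
    rw [e]
    funext i
    obtain ⟨f, hf⟩ := hFn i
    rw [hs'.eq_of_mem hFa (Submodule.mem_sup_left hv) hf, hs.eq_of_mem hag hv hf.1]
  choose p hp using hs.nonempty
  have hpi : LinearIndependent ℝ p := hind p fun i => subset_convexHull ℝ _ (hp i)
  obtain ⟨C, hC0, hC⟩ := hs.lip hfin
  let H : ℝ → E → Fin N → ℝ := fun τ u i => (1 - τ) * h u i + τ * p i u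
  let g : E → Fin N → ℝ := fun u i => p i u - h u i
  have hps : Supp (fun i => {p i}) (fun u i => p i u) := by
    intro u i; simp [isLeast_singleton]
  obtain ⟨C', hC0', hC'⟩ := hps.lip (fun i => Set.finite_singleton _)
  have step : ∀ τ ∈ Set.Icc (0:ℝ) 1, ∃ ε : ℝ, 0 < ε ∧ ∀ s : ℝ, |s| < ε →
      Rel U (H τ) (fun u => H τ u + s • g u) := by
    intro τ hτ
    let W : Fin N → Set (E →L[ℝ] ℝ) := fun i => (fun f => (1 - τ) • f + τ • p i) '' V i
    have hWs : Supp W (H τ) := by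
      intro u i
      obtain ⟨f, hf, e⟩ := (hs u i).1
      simp only at e
      refine ⟨⟨_, ⟨f, hf, rfl⟩, by simp [H, e]⟩, ?_⟩
      rintro _ ⟨_, ⟨f', hf', rfl⟩, rfl⟩
      have := mul_le_mul_of_nonneg_left (hs.le u hf') (sub_nonneg.2 hτ.2)
      simp [H, this]
    have hWc : ∀ i, W i ⊆ convexHull ℝ (V i) := by
      rintro i _ ⟨f, hf, rfl⟩
      exact convex_convexHull ℝ (V i) (subset_convexHull ℝ _ hf) (subset_convexHull ℝ _ (hp i))
        (sub_nonneg.2 hτ.2) hτ.1 (by ring)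
    have hWi : Indep W := fun x hx => hind x fun i =>
      convexHull_min (hWc i) (convex_convexHull ℝ _) (hx i)
    have hWa : Agree U W := by
      rintro i _ ⟨f, hf, rfl⟩ _ ⟨f', hf', rfl⟩ v hv
      simp [hag i f hf f' hf' v hv]
    have hWf : ∀ i, (W i).Finite := fun i => (hfin i).image _
    refine main_step (H τ) hWs.homog (hWs.add hWa) (hloc W (H τ) hWf hWs hWi hWa) g
      (Kg := C' + C) (by positivity) ?_ ?_ ?_
    · intro u v
      have : g u - g v = ((fun i => p i u) - (fun i => p i v)) - (h u - h v) := by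
        funext i; simp only [g, Pi.sub_apply]; ring
      rw [this, add_mul]
      exact (norm_sub_le _ _).trans (add_le_add (hC' u v) (hC u v))
    · intro t ht u
      funext i
      simp only [g, hs.homog t ht, map_smul, Pi.smul_apply, smul_eq_mul]; ring
    · intro u v hv
      funext i
      simp only [g, hs.add hag u v hv, map_add, Pi.add_apply, hs.eq_of_mem hag hv (hp i)]; ring
  have main : Rel U (H 0) (H 1) := by
    refine (isPreconnected_Icc (a := (0:ℝ)) (b := 1)).induction₂ (fun τ τ' => Rel U (H τ) (H τ'))
      ?_ (fun _ _ _ _ _ _ => Rel.trans) (fun _ _ _ _ => Rel.symm)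
      (by simp) (by simp)
    intro τ hτ
    obtain ⟨ε, hε, hr⟩ := step τ hτ
    refine mem_nhdsWithin_of_mem_nhds ?_
    filter_upwards [Metric.ball_mem_nhds τ hε] with τ' hτ'
    have := hr (τ' - τ) hτ'
    have e : (fun u => H τ u + (τ' - τ) • g u) = H τ' := by
      funext u i
      simp only [H, g, Pi.add_apply, Pi.smul_apply, smul_eq_mul]; ring
    rwa [e] at this
  have e0 : H 0 = h := by funext u i; simp [H]
  have e1 : H 1 = fun u i => p i u := by funext u i; simp [H]
  rw [e0, e1] at main
  exact Good.of_rel main (good_linear hd U p hpi)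

end

end CommonTangents

namespace CommonTangents

section

open Filter Topology

open scoped InnerProductSpace

/-- The functional `(u, α) ↦ ⟪x, u⟫ - α`. -/
noncomputable def fn {d : ℕ} (x : EuclideanSpace ℝ (Fin d)) : (EuclideanSpace ℝ (Fin d) × ℝ) →L[ℝ] ℝ :=
  (innerSL ℝ x).comp (ContinuousLinearMap.fst ℝ _ _) - ContinuousLinearMap.snd ℝ _ _

theorem fn_apply {d : ℕ} (x : EuclideanSpace ℝ (Fin d)) (p : EuclideanSpace ℝ (Fin d) × ℝ) :
    fn x p = ⟪p.1, x⟫_ℝ - p.2 := by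
  simp [fn, real_inner_comm]

theorem fn_hull {d : ℕ} (V : Set (EuclideanSpace ℝ (Fin d)))
    {f : (EuclideanSpace ℝ (Fin d) × ℝ) →L[ℝ] ℝ} (hf : f ∈ convexHull ℝ (fn '' V)) :
    ∃ x ∈ convexHull ℝ V, f = fn x := by
  have hsub : convexHull ℝ (fn '' V) ⊆ fn '' convexHull ℝ V := by
    refine convexHull_min (Set.image_mono (subset_convexHull ℝ V)) ?_
    rintro _ ⟨x, hx, rfl⟩ _ ⟨x', hx', rfl⟩ a b ha hb hab
    refine ⟨a • x + b • x', convex_convexHull ℝ V hx hx' ha hb hab, ?_⟩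
    refine ContinuousLinearMap.ext fun p => ?_
    simp only [fn_apply, _root_.add_apply, _root_.smul_apply, inner_add_right, inner_smul_right,
      smul_eq_mul]
    linear_combination (-p.2) * hab * (-1 : ℝ)
  obtain ⟨x, hx, rfl⟩ := hsub hf
  exact ⟨x, hx, rfl⟩

/-- Radial homeomorphism. -/
theorem radial {W G Y : Type*} [NormedAddCommGroup W] [NormedSpace ℝ W]
    [NormedAddCommGroup G] [NormedSpace ℝ G] [NormedAddCommGroup Y] [NormedSpace ℝ Y]
    {U : Submodule ℝ (W × ℝ)} (A : (W × ℝ) ≃ G × Y) (hA : NiceA U A)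
    (hz : ∀ p : W × ℝ, (A p).2 = 0 → p.1 = 0 → p = 0) :
    Nonempty ({p : W × ℝ // ‖p.1‖ = 1 ∧ (A p).2 = 0} ≃ₜ Metric.sphere (0 : G) 1) := by
  have hA0 : A 0 = 0 := homog_zero hA.homog
  have hc : Continuous A := by
    obtain ⟨K, hK⟩ := hA.lip
    refine (LipschitzWith.of_dist_le_mul (K := ⟨|K|, abs_nonneg _⟩) (fun u v => ?_)).continuous
    rw [dist_eq_norm, dist_eq_norm]
    exact (hK u v).trans (mul_le_mul_of_nonneg_right (le_abs_self _) (norm_nonneg _))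
  have hc' : Continuous A.symm := by
    obtain ⟨K, hK0, hK⟩ := hA.lip_symm
    refine (LipschitzWith.of_dist_le_mul (K := ⟨K, hK0⟩) (fun u v => ?_)).continuous
    rw [dist_eq_norm, dist_eq_norm]
    have := hK (A.symm u) (A.symm v)
    simp only [Equiv.apply_symm_apply] at this
    exact this
  have h1 : ∀ p : W × ℝ, ‖p.1‖ = 1 → (A p).2 = 0 → 0 < ‖(A p).1‖ := by
    intro p hp hp2
    rw [norm_pos_iff]
    intro h
    have : A p = A 0 := by rw [hA0]; exact Prod.ext h hp2
    have := A.injective this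
    rw [this] at hp
    simp at hp
  have h2 : ∀ w : G, ‖w‖ = 1 → 0 < ‖(A.symm (w, 0)).1‖ := by
    intro w hw
    rw [norm_pos_iff]
    intro h
    have := hz _ (by simp) h
    rw [Equiv.symm_apply_eq, hA0] at this
    have : w = 0 := congrArg Prod.fst this
    simp [this] at hw
  have hs : ∀ t : ℝ, 0 < t → ∀ x, A.symm (t • x) = t • A.symm x := by
    intro t ht x
    rw [Equiv.symm_apply_eq, hA.homog t ht]; simp
  refine ⟨{
    toFun := fun p => ⟨‖(A p.1).1‖⁻¹ • (A p.1).1, ?_⟩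
    invFun := fun w => ⟨‖(A.symm (w.1, 0)).1‖⁻¹ • A.symm (w.1, 0), ?_, ?_⟩
    left_inv := ?_
    right_inv := ?_
    continuous_toFun := ?_
    continuous_invFun := ?_ }⟩
  · have := h1 p.1 p.2.1 p.2.2
    simp [norm_smul, this.ne']
  · have := h2 w.1 (by simpa using w.2)
    simp [norm_smul, this.ne']
  · have := h2 w.1 (by simpa using w.2)
    rw [hA.homog _ (inv_pos.2 this)]
    simp
  · rintro ⟨p, hp, hp2⟩
    have := h1 p hp hp2
    have e : ((‖(A p).1‖⁻¹ • (A p).1, 0) : G × Y) = ‖(A p).1‖⁻¹ • A p :=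
      Prod.ext rfl (by simp [hp2])
    have e2 : A.symm ((‖(A p).1‖⁻¹ • (A p).1, 0) : G × Y) = ‖(A p).1‖⁻¹ • p := by
      rw [e, hs _ (inv_pos.2 this)]; simp
    apply Subtype.ext
    simp only [e2, Prod.smul_fst, norm_smul, hp, norm_inv, norm_norm, mul_one, inv_inv]
    rw [smul_smul, mul_inv_cancel₀ this.ne', one_smul]
  · rintro ⟨w, hw⟩
    have hw1 : ‖w‖ = 1 := by simpa using hw
    have := h2 w hw1
    apply Subtype.ext
    simp only [hA.homog _ (inv_pos.2 this), Equiv.apply_symm_apply, Prod.smul_fst, norm_smul, hw1,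
      norm_inv, norm_norm, mul_one, inv_inv]
    rw [smul_smul, mul_inv_cancel₀ this.ne', one_smul]
  · refine Continuous.subtype_mk ?_ _
    have hc1 : Continuous fun p : {p : W × ℝ // ‖p.1‖ = 1 ∧ (A p).2 = 0} => (A p.1).1 :=
      continuous_fst.comp (hc.comp continuous_subtype_val)
    exact (hc1.norm.inv₀ fun p => (h1 p.1 p.2.1 p.2.2).ne').smul hc1
  · refine Continuous.subtype_mk ?_ _
    have hc1 : Continuous fun w : Metric.sphere (0 : G) 1 => A.symm ((w.1, 0) : G × Y) :=
      hc'.comp (continuous_subtype_val.prodMk continuous_const)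
    exact (((continuous_fst.comp hc1).norm).inv₀ fun w => (h2 w.1 (by simpa using w.2)).ne').smul hc1

end

end CommonTangents

open CommonTangents

/-- Main Theorem: for a strongly separated family of `m ≤ d` full-dimensional polytopes
in `ℝ^d`, the space of oriented tangent hyperplanes containing the family on their
nonnegative side is homeomorphic to the sphere `S^{d-m}`. -/
theorem common_tangents_to_polytopes {d m : ℕ} (hm : 1 ≤ m) (hmd : m ≤ d)
    (P : Fin m → Set (EuclideanSpace ℝ (Fin d)))
    (hpoly : ∀ i, ∃ V : Finset (EuclideanSpace ℝ (Fin d)), P i = convexHull ℝ (V : Set _))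
    (hfull : ∀ i, (interior (P i)).Nonempty)
    (hsep : StronglySeparated P) :
    Nonempty (
      {p : EuclideanSpace ℝ (Fin d) × ℝ // ‖p.1‖ = 1 ∧ ∀ i : Fin m,
          ({x | ⟪p.1, x⟫_ℝ = p.2} ∩ P i).Nonempty ∧ P i ⊆ {x | p.2 ≤ ⟪p.1, x⟫_ℝ}}
        ≃ₜ Metric.sphere (0 : EuclideanSpace ℝ (Fin (d - m + 1))) 1) := by
  choose V hV using hpoly
  have hVne : ∀ i, (V i : Set (EuclideanSpace ℝ (Fin d))).Nonempty := by
    intro i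
    have h1 := (hfull i).mono interior_subset
    rw [hV i] at h1
    exact convexHull_nonempty_iff.1 h1
  have hVP : ∀ i, ∀ x ∈ V i, x ∈ P i := by
    intro i x hx
    rw [hV i]; exact subset_convexHull ℝ _ hx
  let F : Fin m → Set ((EuclideanSpace ℝ (Fin d) × ℝ) →L[ℝ] ℝ) :=
    fun i => fn '' (V i : Set (EuclideanSpace ℝ (Fin d)))
  have hFf : ∀ i, (F i).Finite := fun i => (V i).finite_toSet.image _
  obtain ⟨h, hs⟩ := Supp.exists hFf fun i => (hVne i).image _
  have hind : Indep F := by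
    intro x hx
    have hx' : ∀ i, ∃ y ∈ P i, x i = fn y := by
      intro i
      obtain ⟨y, hy, e⟩ := fn_hull _ (hx i)
      exact ⟨y, by rw [hV i]; exact hy, e⟩
    choose y hy e using hx'
    rw [Fintype.linearIndependent_iff]
    intro c hc
    obtain ⟨u, α, -, h1, h2⟩ := hsep (Finset.univ.filter fun i => 0 < c i)
    have h3 := congrArg (fun f => f (u, α)) hc
    simp only [_root_.sum_apply, _root_.smul_apply, e, fn_apply, smul_eq_mul,
      _root_.zero_apply] at h3
    have hle : ∀ i, c i * (⟪u, y i⟫_ℝ - α) ≤ 0 := by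
      intro i
      by_cases hi : 0 < c i
      · have := h1 i (by simp [hi]) (y i) (hy i)
        exact mul_nonpos_of_nonneg_of_nonpos hi.le (by linarith)
      · have := h2 i (by simpa using hi) (y i) (hy i)
        exact mul_nonpos_of_nonpos_of_nonneg (not_lt.1 hi) (by linarith)
    intro i
    have h4 := (Finset.sum_eq_zero_iff_of_nonpos fun i _ => hle i).1 h3 i (Finset.mem_univ i)
    rcases mul_eq_zero.1 h4 with h5 | h5
    · exact h5
    · exfalso
      by_cases hi : 0 < c i
      · have := h1 i (by simp [hi]) (y i) (hy i)
        linarith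
      · have := h2 i (by simpa using hi) (y i) (hy i)
        linarith
  have hag : Agree ⊥ F := by
    intro i f _ f' _ v hv
    rw [(Submodule.mem_bot ℝ).1 hv, map_zero, map_zero]
  have hd : Module.finrank ℝ (EuclideanSpace ℝ (Fin d) × ℝ) =
      Module.finrank ℝ (EuclideanSpace ℝ (Fin (d - m + 1))) + m := by
    rw [Module.finrank_prod, finrank_euclideanSpace_fin, finrank_euclideanSpace_fin,
      Module.finrank_self]
    omega
  obtain ⟨A, hA, hAh⟩ := claim (G := EuclideanSpace ℝ (Fin (d - m + 1))) hd _ ⊥ F h rfl hFf hs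
    hind hag
  have hval : ∀ p i, ∃ x ∈ P i, ⟪p.1, x⟫_ℝ - p.2 = h p i := by
    intro p i
    obtain ⟨_, ⟨x, hx, rfl⟩, e⟩ := (hs p i).1
    exact ⟨x, hVP i x hx, by rw [← e]; exact (fn_apply x p).symm⟩
  have hmin : ∀ p i, ∀ x ∈ P i, h p i ≤ ⟪p.1, x⟫_ℝ - p.2 := by
    intro p i x hx
    have hconv : Convex ℝ {x : EuclideanSpace ℝ (Fin d) | h p i + p.2 ≤ ⟪p.1, x⟫_ℝ} :=
      convex_halfSpace_ge (innerSL ℝ p.1).isBoundedLinearMap.toIsLinearMap _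
    have hsub : convexHull ℝ (V i : Set (EuclideanSpace ℝ (Fin d))) ⊆
        {x : EuclideanSpace ℝ (Fin d) | h p i + p.2 ≤ ⟪p.1, x⟫_ℝ} := by
      refine convexHull_min (fun z hz => ?_) hconv
      have := hs.le p (i := i) ⟨z, hz, rfl⟩
      rw [fn_apply] at this
      simp only [Set.mem_ofPred_eq]
      linarith
    rw [hV i] at hx
    have : h p i + p.2 ≤ ⟪p.1, x⟫_ℝ := hsub hx
    linarith
  have hiff : ∀ p : EuclideanSpace ℝ (Fin d) × ℝ, (‖p.1‖ = 1 ∧ ∀ i : Fin m,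
      ({x | ⟪p.1, x⟫_ℝ = p.2} ∩ P i).Nonempty ∧ P i ⊆ {x | p.2 ≤ ⟪p.1, x⟫_ℝ}) ↔
      (‖p.1‖ = 1 ∧ (A p).2 = 0) := by
    intro p
    refine and_congr_right fun _ => ?_
    rw [hAh, funext_iff]
    refine forall_congr' fun i => ?_
    constructor
    · rintro ⟨⟨x, hx1, hx⟩, hsub⟩
      have h1 := hmin p i x hx
      have hx1' : ⟪p.1, x⟫_ℝ = p.2 := hx1
      obtain ⟨z, hz, e⟩ := hval p i
      have h2 : p.2 ≤ ⟪p.1, z⟫_ℝ := hsub hz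
      simp only [Pi.zero_apply]
      linarith
    · intro h0
      simp only [Pi.zero_apply] at h0
      obtain ⟨z, hz, e⟩ := hval p i
      refine ⟨⟨z, ?_, hz⟩, fun x hx => ?_⟩
      · simp only [Set.mem_ofPred_eq]; linarith
      · have := hmin p i x hx
        simp only [Set.mem_ofPred_eq]; linarith
  obtain ⟨e⟩ := radial A hA (by
    intro p h0 hp
    obtain ⟨x, _, e⟩ := hval p ⟨0, hm⟩
    rw [← hAh, h0, hp, inner_zero_left] at e
    simp only [Pi.zero_apply] at e
    exact Prod.ext hp (by simp only [Prod.snd_zero]; linarith))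
  exact ⟨(Homeomorph.setCongr (Set.ext hiff)).trans e⟩
end

section
/- (Bisztriczky's theorem, per partition.) Let K₁,…,K_d be a strongly separated family of convex bodies in ℝ^d and let A ⊔ B = {1,…,d} be a partition. Then there exist exactly two pairs (u,α) with u ∈ ℝ^d, ‖u‖ = 1, α ∈ ℝ such that the hyperplane H_{u,α} = {x : ⟨u,x⟩ = α} is tangent to every Kᵢ (i.e., H_{u,α} ∩ Kᵢ ≠ ∅ for every i), K_a ⊆ {x : ⟨u,x⟩ ≥ α} for every a ∈ A, and K_b ⊆ {x : ⟨u,x⟩ ≤ α} for every b ∈ B. -/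
open scoped InnerProductSpace

set_option linter.unusedSectionVars false

namespace Bisz

open Set

variable {V : Type*} [NormedAddCommGroup V] [InnerProductSpace ℝ V] [FiniteDimensional ℝ V]
variable {ι : Type*} [Fintype ι] [DecidableEq ι]

/-- `h` is a concave function with supergradients in `L` at every point. -/
def SupG (L : Set V) (h : V → ℝ) : Prop :=
  ∀ v, ∃ m ∈ L, ⟪m, v⟫_ℝ = h v ∧ ∀ v', h v' ≤ ⟪m, v'⟫_ℝ

theorem mv {C : Set V} (hC : Convex ℝ C) {h : V → ℝ} {v v' m m' : V} (hm : m ∈ C) (hm' : m' ∈ C)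
    (e : ⟪m, v⟫_ℝ = h v) (e' : ⟪m', v'⟫_ℝ = h v')
    (l : h v' ≤ ⟪m, v'⟫_ℝ) (l' : h v ≤ ⟪m', v⟫_ℝ) :
    ∃ y ∈ C, h v' - h v = ⟪y, v' - v⟫_ℝ := by
  have hcont : ContinuousOn (fun y : V => ⟪y, v' - v⟫_ℝ) C := by fun_prop
  have := hC.isPreconnected.intermediate_value hm' hm hcont
  have hmem : h v' - h v ∈ Icc ⟪m', v' - v⟫_ℝ ⟪m, v' - v⟫_ℝ := by
    rw [inner_sub_right, inner_sub_right]
    constructor <;> linarith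
  obtain ⟨y, hy, hy'⟩ := this hmem
  exact ⟨y, hy, hy'.symm⟩

theorem SupG.mv {L : Set V} (hL : Convex ℝ L) {h : V → ℝ} (H : SupG L h) (v v' : V) :
    ∃ y ∈ L, h v' - h v = ⟪y, v' - v⟫_ℝ := by
  obtain ⟨m, hm, e, l⟩ := H v
  obtain ⟨m', hm', e', l'⟩ := H v'
  exact Bisz.mv hL hm hm' e e' (l _) (l' _)

theorem SupG.zero {L : Set V} {h : V → ℝ} (H : SupG L h) : h 0 = 0 := by
  obtain ⟨m, hm, e, l⟩ := H 0
  simpa using e.symm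

theorem SupG.smul {L : Set V} {h : V → ℝ} (H : SupG L h) (v : V) {a : ℝ} (ha : 0 ≤ a) :
    h (a • v) = a * h v := by
  rcases ha.eq_or_lt with rfl | ha
  · simp [H.zero]
  obtain ⟨m, hm, e, l⟩ := H v
  obtain ⟨m', hm', e', l'⟩ := H (a • v)
  have h1 := l (a • v)
  have h2 := l' v
  rw [inner_smul_right] at h1 e'
  rw [e] at h1
  have := mul_le_mul_of_nonneg_left h2 ha.le
  linarith

theorem SupG.lip {L : Set V} (hL : Convex ℝ L) {h : V → ℝ} (H : SupG L h) {R : ℝ}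
    (hR : ∀ y ∈ L, ‖y‖ ≤ R) (v v' : V) : |h v' - h v| ≤ R * ‖v' - v‖ := by
  obtain ⟨y, hy, e⟩ := H.mv hL v v'
  rw [e]
  exact (abs_real_inner_le_norm _ _).trans (by gcongr; exact hR y hy)

theorem SupG.cont {L : Set V} (hL : Convex ℝ L) (hLc : IsCompact L) {h : V → ℝ} (H : SupG L h) :
    Continuous h := by
  obtain ⟨R, hR⟩ := hLc.isBounded.exists_norm_le
  have : LipschitzWith (Real.toNNReal (max R 0)) h := by
    apply LipschitzWith.of_dist_le_mul
    intro x y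
    rw [Real.dist_eq, dist_eq_norm, Real.coe_toNNReal _ (le_max_right _ _)]
    exact H.lip hL (fun y hy => (hR y hy).trans (le_max_left _ _)) y x
  exact this.continuous

/-- the matrix rows with the extra vector -/
def ext (Y : ι → V) (v : V) : Option ι → V := fun o => o.elim v Y

/-- determinant form -/
noncomputable def Dt (b : Module.Basis (Option ι) ℝ V) (Y : ι → V) (v : V) : ℝ := b.det (ext Y v)

theorem Dt_cont (b : Module.Basis (Option ι) ℝ V) :
    Continuous (fun p : (ι → V) × V => Dt b p.1 p.2) := by
  unfold Dt
  simp only [Module.Basis.det_apply]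
  apply Continuous.matrix_det
  refine continuous_matrix ?_
  intro i j
  simp only [Module.Basis.toMatrix_apply]
  have : Continuous (fun x : V => b.repr x i) :=
    LinearMap.continuous_of_finiteDimensional (b.coord i)
  refine this.comp ?_
  cases j <;> simp only [ext, Option.elim] <;> fun_prop

theorem Dt_ne_zero_iff (b : Module.Basis (Option ι) ℝ V) (Y : ι → V) (v : V) :
    Dt b Y v ≠ 0 ↔ LinearIndependent ℝ (ext Y v) := by
  constructor
  · intro h
    exact ((b.is_basis_iff_det).2 (isUnit_iff_ne_zero.2 h)).1
  · intro h
    have hc : Fintype.card (Option ι) = Module.finrank ℝ V := (Module.finrank_eq_card_basis b).symm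
    have := h.span_eq_top_of_card_eq_finrank' hc
    exact ((b.is_basis_iff_det).1 ⟨h, this⟩).ne_zero

theorem Dt_neg (b : Module.Basis (Option ι) ℝ V) (Y : ι → V) (v : V) (c : ℝ) :
    Dt b Y (c • v) = c * Dt b Y v := by
  have h : ∀ w, ext Y w = Function.update (ext Y v) none w := by
    intro w
    funext o
    cases o <;> simp [ext]
  unfold Dt
  rw [h (c • v), AlternatingMap.map_update_smul, ← h v, smul_eq_mul]

theorem Dt_ne_zero (b : Module.Basis (Option ι) ℝ V) {Y : ι → V} (hY : LinearIndependent ℝ Y)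
    {v : V} (hv : v ≠ 0) (h0 : ∀ i, ⟪Y i, v⟫_ℝ = 0) : Dt b Y v ≠ 0 := by
  rw [Dt_ne_zero_iff, linearIndependent_option]
  refine ⟨hY, ?_⟩
  intro hmem
  replace hmem : v ∈ Submodule.span ℝ (range Y) := hmem
  apply hv
  have : Submodule.span ℝ (range Y) ≤ (ℝ ∙ v)ᗮ := by
    rw [Submodule.span_le]
    rintro _ ⟨i, rfl⟩
    rw [SetLike.mem_coe, Submodule.mem_orthogonal_singleton_iff_inner_left]
    exact h0 i
  have := this hmem
  rw [Submodule.mem_orthogonal_singleton_iff_inner_left] at this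
  exact inner_self_eq_zero.1 this

theorem eq_zero_of_Dt (b : Module.Basis (Option ι) ℝ V) {Y : ι → V} {v0 x : V}
    (hD : Dt b Y v0 ≠ 0) (h0 : ∀ i, ⟪Y i, x⟫_ℝ = 0) (hx : ⟪x, v0⟫_ℝ = 0) : x = 0 := by
  have hl := (Dt_ne_zero_iff b Y v0).1 hD
  have hc : Fintype.card (Option ι) = Module.finrank ℝ V := (Module.finrank_eq_card_basis b).symm
  have ht := hl.span_eq_top_of_card_eq_finrank' hc
  have : Submodule.span ℝ (range (ext Y v0)) ≤ (ℝ ∙ x)ᗮ := by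
    rw [Submodule.span_le]
    rintro _ ⟨i, rfl⟩
    rw [SetLike.mem_coe, Submodule.mem_orthogonal_singleton_iff_inner_left]
    cases i with
    | none => simpa [ext, real_inner_comm] using hx
    | some i => simpa [ext] using h0 i
  have := this (ht ▸ Submodule.mem_top : x ∈ _)
  rw [Submodule.mem_orthogonal_singleton_iff_inner_left] at this
  exact inner_self_eq_zero.1 this

/-- The oriented closed cone of transversals. -/
def Tr (b : Module.Basis (Option ι) ℝ V) (L : ι → Set V) (σ : ℝ) : Set V :=
  {v | ∃ Y ∈ univ.pi L, (∀ i, ⟪Y i, v⟫_ℝ = 0) ∧ 0 ≤ σ * Dt b Y v}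

theorem Tr_closed (b : Module.Basis (Option ι) ℝ V) {L : ι → Set V} (hLc : ∀ i, IsCompact (L i))
    (σ : ℝ) : IsClosed (Tr b L σ) := by
  have hK : IsCompact (univ.pi L) := isCompact_univ_pi hLc
  have : CompactSpace (univ.pi L) := isCompact_iff_compactSpace.1 hK
  have hcl : IsClosed {p : (univ.pi L) × V | (∀ i, ⟪(p.1 : ι → V) i, p.2⟫_ℝ = 0) ∧
      0 ≤ σ * Dt b (p.1 : ι → V) p.2} := by
    rw [Set.ofPred_and]
    refine IsClosed.inter ?_ ?_
    · rw [Set.ofPred_forall]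
      refine isClosed_iInter fun i => isClosed_eq ?_ continuous_const
      exact ((continuous_apply i).comp (continuous_subtype_val.comp continuous_fst)).inner
        continuous_snd
    · refine isClosed_le continuous_const (continuous_const.mul ?_)
      exact (Dt_cont b).comp (by fun_prop : Continuous fun p : (univ.pi L) × V => ((p.1 : ι → V), p.2))
  have := isClosedMap_snd_of_compactSpace (X := univ.pi L) (Y := V) _ hcl
  convert this using 1
  ext v
  simp only [Tr, mem_ofPred_eq, mem_image, Prod.exists, Subtype.exists]
  constructor
  · rintro ⟨Y, hY, h⟩
    exact ⟨Y, hY, v, h, rfl⟩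
  · rintro ⟨Y, hY, w, h, rfl⟩
    exact ⟨Y, hY, h⟩

theorem Tr_smul (b : Module.Basis (Option ι) ℝ V) {L : ι → Set V} {σ : ℝ} {v : V} {c : ℝ}
    (hc : 0 ≤ c) (hv : v ∈ Tr b L σ) : c • v ∈ Tr b L σ := by
  obtain ⟨Y, hY, h0, h⟩ := hv
  refine ⟨Y, hY, fun i => by rw [inner_smul_right, h0, mul_zero], ?_⟩
  rw [Dt_neg]
  have := mul_nonneg hc h
  linarith

theorem Tr_neg (b : Module.Basis (Option ι) ℝ V) {L : ι → Set V} {σ : ℝ} {v : V}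
    (hv : v ∈ Tr b L σ) : -v ∈ Tr b L (-σ) := by
  obtain ⟨Y, hY, h0, h⟩ := hv
  refine ⟨Y, hY, fun i => by rw [inner_neg_right, h0, neg_zero], ?_⟩
  rw [← neg_one_smul ℝ v, Dt_neg]
  linarith

theorem Tr_cover (b : Module.Basis (Option ι) ℝ V) {L : ι → Set V} (σ : ℝ) {v : V}
    {Y : ι → V} (hY : ∀ i, Y i ∈ L i) (h0 : ∀ i, ⟪Y i, v⟫_ℝ = 0) :
    v ∈ Tr b L σ ∨ v ∈ Tr b L (-σ) := by
  rcases le_total 0 (σ * Dt b Y v) with h | h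
  · exact Or.inl ⟨Y, fun i _ => hY i, h0, h⟩
  · exact Or.inr ⟨Y, fun i _ => hY i, h0, by linarith⟩

theorem Tr_disj (b : Module.Basis (Option ι) ℝ V) {L : ι → Set V} (hL : ∀ i, Convex ℝ (L i))
    (hind : ∀ Y : ι → V, (∀ i, Y i ∈ L i) → LinearIndependent ℝ Y) {σ : ℝ} (hσ : σ ≠ 0) {v : V}
    (hv : v ∈ Tr b L σ) (hv' : v ∈ Tr b L (-σ)) : v = 0 := by
  by_contra hne
  obtain ⟨Y, hY, h0, h⟩ := hv
  obtain ⟨Y', hY', h0', h'⟩ := hv'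
  have hC : Convex ℝ (univ.pi fun i => L i ∩ {y | ⟪y, v⟫_ℝ = 0}) := by
    apply convex_pi
    intro i _
    refine (hL i).inter ?_
    intro x hx y hy a c _ _ _
    simp only [mem_ofPred_eq] at *
    rw [inner_add_left, inner_smul_left, inner_smul_left, hx, hy]; simp
  have hcont : ContinuousOn (fun Y => σ * Dt b Y v)
      (univ.pi fun i => L i ∩ {y | ⟪y, v⟫_ℝ = 0}) := by
    apply Continuous.continuousOn
    exact continuous_const.mul ((Dt_cont b).comp (by fun_prop : Continuous fun Y : ι → V => (Y, v)))
  have hm : Y ∈ univ.pi fun i => L i ∩ {y | ⟪y, v⟫_ℝ = 0} := fun i hi => ⟨hY i hi, h0 i⟩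
  have hm' : Y' ∈ univ.pi fun i => L i ∩ {y | ⟪y, v⟫_ℝ = 0} := fun i hi => ⟨hY' i hi, h0' i⟩
  obtain ⟨Z, hZ, hZ0⟩ := hC.isPreconnected.intermediate_value hm' hm hcont
    (show (0 : ℝ) ∈ Icc _ _ from ⟨by linarith, h⟩)
  exact (mul_ne_zero hσ (Dt_ne_zero b (hind Z fun i => (hZ i (mem_univ i)).1) hne
    fun i => (hZ i (mem_univ i)).2)) hZ0

theorem uniq (b : Module.Basis (Option ι) ℝ V) {L : ι → Set V} (hL : ∀ i, Convex ℝ (L i))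
    (hLc : ∀ i, IsCompact (L i))
    (hind : ∀ Y : ι → V, (∀ i, Y i ∈ L i) → LinearIndependent ℝ Y) {σ : ℝ} (hσ : σ ≠ 0)
    {h : ι → V → ℝ} (H : ∀ i, SupG (L i) (h i)) {v v' : V}
    (hv : v ∈ Tr b L σ) (hv' : v' ∈ Tr b L σ) (z : ∀ i, h i v = 0) (z' : ∀ i, h i v' = 0) :
    ∃ t ∈ Icc (0 : ℝ) 1, (1 - t) • v = t • v' := by
  by_contra! hcon
  let w : ℝ → V := fun t => (1 - t) • v - t • v'
  have hw : Continuous w := by fun_prop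
  have hcov : Icc (0 : ℝ) 1 ⊆ w ⁻¹' Tr b L σ ∪ w ⁻¹' Tr b L (-σ) := by
    intro t ht
    have : ∀ i, ∃ y ∈ L i, ⟪y, w t⟫_ℝ = 0 := by
      intro i
      obtain ⟨y, hy, e⟩ := (H i).mv (hL i) (t • v') ((1 - t) • v)
      refine ⟨y, hy, ?_⟩
      rw [← e, (H i).smul _ ht.1, (H i).smul _ (by linarith [ht.2]), z, z']
      simp
    choose Y hY hY0 using this
    exact Tr_cover b σ hY hY0
  have hpre := isPreconnected_Icc (a := (0 : ℝ)) (b := 1)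
  rw [isPreconnected_closed_iff] at hpre
  obtain ⟨t, ht, ht1, ht2⟩ := hpre _ _ ((Tr_closed b hLc σ).preimage hw)
    ((Tr_closed b hLc (-σ)).preimage hw) hcov ⟨0, by simp, by simpa [w] using hv⟩
    ⟨1, by simp, by simpa [w] using Tr_neg b hv'⟩
  exact hcon t ht (sub_eq_zero.1 (Tr_disj b hL hind hσ ht1 ht2))

theorem stable (b : Module.Basis (Option ι) ℝ V) {L : ι → Set V} (hL : ∀ i, Convex ℝ (L i))
    (hLc : ∀ i, IsCompact (L i))
    (hind : ∀ Y : ι → V, (∀ i, Y i ∈ L i) → LinearIndependent ℝ Y)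
    {h0 : ι → V → ℝ} (H0 : ∀ i, SupG (L i) (h0 i)) {v0 : V} (hv0 : v0 ≠ 0) (z0 : ∀ i, h0 i v0 = 0)
    {δ : ℝ} (hδ : 0 < δ) :
    ∃ η > 0, ∀ h : ι → V → ℝ, (∀ i, SupG (L i) (h i)) →
      (∀ i, ∀ v ∈ Metric.closedBall v0 1, |h i v - h0 i v| ≤ η) →
      ∃ v1, dist v1 v0 < δ ∧ ∀ i, h i v1 = 0 := by
  -- uniform bound
  obtain ⟨R, hRpos, hR⟩ : ∃ R : ℝ, 0 < R ∧ ∀ i, ∀ y ∈ L i, ‖y‖ ≤ R := by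
    have hb : Bornology.IsBounded (⋃ i, L i) :=
      (isCompact_iUnion hLc).isBounded
    obtain ⟨R, hR⟩ := hb.exists_norm_le
    refine ⟨max R 1, by positivity, fun i y hy => (hR y (mem_iUnion.2 ⟨i, hy⟩)).trans (le_max_left _ _)⟩
  -- nondegeneracy near `v0`
  obtain ⟨ε, hε, hεD⟩ : ∃ ε > 0, ∀ Y : ι → V, (∀ i, Y i ∈ L i) → (∀ i, |⟪Y i, v0⟫_ℝ| ≤ ε) →
      Dt b Y v0 ≠ 0 := by
    have hc : IsCompact (univ.pi L ∩ {Y | Dt b Y v0 = 0}) := by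
      refine (isCompact_univ_pi hLc).inter_right (isClosed_eq ?_ continuous_const)
      exact (Dt_cont b).comp (by fun_prop : Continuous fun Y : ι → V => (Y, v0))
    have hf : ContinuousOn (fun Y : ι → V => ‖fun i => ⟪Y i, v0⟫_ℝ‖)
        (univ.pi L ∩ {Y | Dt b Y v0 = 0}) := by fun_prop
    obtain ⟨a, ha, hle⟩ := hc.exists_forall_le' hf (a := 0) (by
      rintro Y ⟨hY, hD⟩
      rw [norm_pos_iff]
      intro h
      exact Dt_ne_zero b (hind Y fun i => hY i (mem_univ i)) hv0 (fun i => congrFun h i) hD)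
    refine ⟨a / 2, by positivity, fun Y hY h hD => ?_⟩
    have h1 := hle Y ⟨fun i _ => hY i, hD⟩
    have h2 : ‖fun i => ⟪Y i, v0⟫_ℝ‖ ≤ a / 2 := (pi_norm_le_iff_of_nonneg (by positivity)).2 h
    linarith
  let C : ι → Set V := fun i => L i ∩ {y | |⟪y, v0⟫_ℝ| ≤ ε}
  have hCconv : ∀ i, Convex ℝ (C i) := by
    intro i
    refine (hL i).inter ?_
    have : {y : V | |⟪y, v0⟫_ℝ| ≤ ε} = (innerSL ℝ v0) ⁻¹' (Icc (-ε) ε) := by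
      ext y
      simp [abs_le, real_inner_comm]
    rw [this]
    exact (convex_Icc _ _).linear_preimage (innerSL ℝ v0).toLinearMap
  have hCcomp : ∀ i, IsCompact (C i) := by
    intro i
    exact (hLc i).inter_right (isClosed_le (by fun_prop) continuous_const)
  -- radius
  obtain ⟨r, hr0, hr1, hrδ, hrε⟩ : ∃ r : ℝ, 0 < r ∧ r ≤ 1 ∧ r < δ ∧ 4 * (R * r) ≤ ε := by
    refine ⟨min (min 1 (δ / 2)) (ε / (4 * R)), by positivity, ?_, ?_, ?_⟩
    · exact (min_le_left _ _).trans (min_le_left _ _)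
    · exact ((min_le_left _ _).trans (min_le_right _ _)).trans_lt (by linarith)
    · have : min (min 1 (δ / 2)) (ε / (4 * R)) ≤ ε / (4 * R) := min_le_right _ _
      rw [le_div_iff₀ (by positivity)] at this
      linarith
  -- mean value in the ball
  have key : ∀ (h : ι → V → ℝ), (∀ i, SupG (L i) (h i)) →
      (∀ i, ∀ v ∈ Metric.closedBall v0 1, |h i v - h0 i v| ≤ ε / 2) →
      ∀ i, ∀ v ∈ Metric.closedBall v0 r, ∀ v' ∈ Metric.closedBall v0 r,
      ∃ y ∈ C i, h i v' - h i v = ⟪y, v' - v⟫_ℝ := by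
    intro h H hclose i v hv v' hv'
    have aux : ∀ w ∈ Metric.closedBall v0 r, ∀ m ∈ L i, ⟪m, w⟫_ℝ = h i w → m ∈ C i := by
      intro w hw m hm e
      refine ⟨hm, ?_⟩
      have h1 := hclose i w (Metric.closedBall_subset_closedBall hr1 hw)
      have h2 := (H0 i).lip (hL i) (hR i) v0 w
      rw [z0, sub_zero] at h2
      have hw' : ‖w - v0‖ ≤ r := by rwa [← dist_eq_norm]
      have h3 : |⟪m, w - v0⟫_ℝ| ≤ R * r :=
        (abs_real_inner_le_norm _ _).trans (by gcongr; exact hR i m hm)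
      have h4 : R * ‖w - v0‖ ≤ R * r := by gcongr
      rw [inner_sub_right, e] at h3
      simp only [mem_ofPred_eq]
      rw [abs_le] at *
      constructor <;> linarith [h1.1, h1.2, h2.1, h2.2, h3.1, h3.2]
    obtain ⟨m, hm, e, l⟩ := H i v
    obtain ⟨m', hm', e', l'⟩ := H i v'
    exact mv (hCconv i) (aux v hv m hm e) (aux v' hv' m' hm' e') e e' (l _) (l' _)
  have hCD : ∀ Y : ι → V, (∀ i, Y i ∈ C i) → Dt b Y v0 ≠ 0 := fun Y hY =>
    hεD Y (fun i => (hY i).1) (fun i => (hY i).2)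
  -- lower bound on the boundary of the slice
  have hScomp : IsCompact (Metric.sphere v0 r ∩ {v | ⟪v - v0, v0⟫_ℝ = 0}) :=
    (isCompact_sphere v0 r).inter_right (isClosed_eq (by fun_prop) continuous_const)
  have h0cont : ∀ i, Continuous (h0 i) := fun i => (H0 i).cont (hL i) (hLc i)
  obtain ⟨m, hm, hmle⟩ := hScomp.exists_forall_le' (f := fun v => ‖fun i => h0 i v‖) (a := 0)
    (by fun_prop) (by
      rintro v ⟨hv, hv'⟩
      rw [norm_pos_iff]
      intro hz
      have := fun i => key h0 H0 (fun i v _ => by simp; positivity) i v0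
        (Metric.mem_closedBall_self hr0.le) v (Metric.sphere_subset_closedBall hv)
      choose Y hY e using this
      have hx : v - v0 = 0 := by
        refine eq_zero_of_Dt b (hCD Y hY) (fun i => ?_) hv'
        rw [← e i, z0]
        have := congrFun hz i
        simp only [Pi.zero_apply] at this
        rw [this, sub_zero]
      rw [Metric.mem_sphere, dist_eq_norm, hx, norm_zero] at hv
      exact hr0.ne hv)
  let n : ℝ := Fintype.card ι
  have hn : 0 ≤ n := Nat.cast_nonneg _
  refine ⟨min (ε / 2) (m / (n + 2)), by positivity, ?_⟩
  intro h H hclose'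
  set η := min (ε / 2) (m / (n + 2)) with hηdef
  have hη : 0 < η := by positivity
  have hη1 : η ≤ ε / 2 := min_le_left _ _
  have hη2 : η * (n + 2) ≤ m := by
    rw [← le_div_iff₀ (by positivity)]; exact min_le_right _ _
  have hclose : ∀ i, ∀ v ∈ Metric.closedBall v0 1, |h i v - h0 i v| ≤ ε / 2 := fun i v hv =>
    (hclose' i v hv).trans hη1
  have hcont : ∀ i, Continuous (h i) := fun i => (H i).cont (hL i) (hLc i)
  have hMV := key h H hclose
  have hKcomp : IsCompact (Metric.closedBall v0 r ∩ {v | ⟪v - v0, v0⟫_ℝ = 0}) :=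
    (isCompact_closedBall v0 r).inter_right (isClosed_eq (by fun_prop) continuous_const)
  have hv0K : v0 ∈ Metric.closedBall v0 r ∩ {v | ⟪v - v0, v0⟫_ℝ = 0} :=
    ⟨Metric.mem_closedBall_self hr0.le, by simp⟩
  obtain ⟨v1, ⟨hv1, hv1'⟩, hmin⟩ := hKcomp.exists_isMinOn ⟨v0, hv0K⟩
    (f := fun v => ∑ i, (h i v) ^ 2) (by fun_prop)
  have hmin' : ∀ v ∈ Metric.closedBall v0 r, ⟪v - v0, v0⟫_ℝ = 0 →
      ∑ i, (h i v1) ^ 2 ≤ ∑ i, (h i v) ^ 2 := fun v hv hv' => hmin ⟨hv, hv'⟩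
  have hint : ‖v1 - v0‖ < r := by
    rw [Metric.mem_closedBall, dist_eq_norm] at hv1
    refine lt_of_le_of_ne hv1 fun heq => ?_
    have hsph : v1 ∈ Metric.sphere v0 r := by rw [Metric.mem_sphere, dist_eq_norm, heq]
    have h1 := hmle v1 ⟨hsph, hv1'⟩
    have h2 : ∑ i, (h i v0) ^ 2 ≤ n * η ^ 2 := by
      calc ∑ i, (h i v0) ^ 2 ≤ ∑ i : ι, η ^ 2 := by
            apply Finset.sum_le_sum
            intro i _
            have := hclose' i v0 (Metric.mem_closedBall_self zero_le_one)
            rw [z0, sub_zero] at this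
            exact sq_le_sq' (abs_le.1 this).1 (abs_le.1 this).2
        _ = n * η ^ 2 := by simp [n]
    have h3 : ∃ i, m ≤ |h0 i v1| := by
      by_contra! hlt
      have : ‖fun i => h0 i v1‖ < m := (pi_norm_lt_iff hm).2 hlt
      exact absurd h1 (not_le.2 this)
    obtain ⟨i, hi⟩ := h3
    have h4 := hclose' i v1 (Metric.closedBall_subset_closedBall hr1 (Metric.sphere_subset_closedBall hsph))
    have h5 : (n + 1) * η ≤ |h i v1| := by
      have := abs_sub_abs_le_abs_sub (h0 i v1) (h i v1)
      rw [abs_sub_comm] at this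
      linarith
    have h6 : ((n + 1) * η) ^ 2 ≤ (h i v1) ^ 2 := by
      rw [← sq_abs (h i v1)]
      gcongr
    have h7 : (h i v1) ^ 2 ≤ ∑ i, (h i v1) ^ 2 :=
      Finset.single_le_sum (f := fun i => (h i v1) ^ 2) (fun i _ => sq_nonneg _) (Finset.mem_univ i)
    have h8 := hmin' v0 hv0K.1 hv0K.2
    have h9 : n * η ^ 2 < ((n + 1) * η) ^ 2 := by
      have : 0 < η ^ 2 := by positivity
      nlinarith
    linarith
  refine ⟨v1, by rw [dist_eq_norm]; linarith, ?_⟩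
  by_contra! hne
  obtain ⟨j, hj⟩ := hne
  -- separate
  let φ : (ι → V) →L[ℝ] V := ∑ i, (h i v1) • ContinuousLinearMap.proj i
  have hφ : ∀ Y, φ Y = ∑ i, (h i v1) • Y i := by
    intro Y; simp [φ]
  have hQc : IsCompact (φ '' univ.pi C) := (isCompact_univ_pi hCcomp).image φ.continuous
  have hQconv : Convex ℝ (φ '' univ.pi C) :=
    (convex_pi fun i _ => hCconv i).linear_image φ.toLinearMap
  have hdisj : Disjoint (φ '' univ.pi C) ((ℝ ∙ v0 : Submodule ℝ V) : Set V) := by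
    rw [Set.disjoint_left]
    rintro _ ⟨Y, hY, rfl⟩ hmem
    have hli := (Dt_ne_zero_iff b Y v0).1 (hCD Y fun i => hY i (mem_univ i))
    obtain ⟨a, ha⟩ := Submodule.mem_span_singleton.1 hmem
    rw [Fintype.linearIndependent_iff] at hli
    have := hli (fun o => o.elim (-a) (fun i => h i v1)) (by
      rw [Fintype.sum_option]
      simp only [Option.elim, ext]
      rw [← hφ, ← ha]
      simp) (some j)
    exact hj this
  obtain ⟨f, u, w, hfu, huw, hfw⟩ := geometric_hahn_banach_compact_closed hQconv hQc
    (ℝ ∙ v0 : Submodule ℝ V).convex (Submodule.closed_of_finiteDimensional _) hdisj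
  have hw0 : w < 0 := by simpa using hfw 0 (Submodule.zero_mem _)
  have hfv0 : f v0 = 0 := by
    by_contra hf0
    have := hfw ((w / f v0) • v0) (Submodule.smul_mem _ _ (Submodule.mem_span_singleton_self _))
    rw [map_smul, smul_eq_mul, div_mul_cancel₀ _ hf0] at this
    exact lt_irrefl _ this
  let z : V := (InnerProductSpace.toDual ℝ V).symm f
  have hz : ∀ y, ⟪y, z⟫_ℝ = f y := by
    intro y
    rw [real_inner_comm]
    exact InnerProductSpace.toDual_symm_apply
  have hu : 0 < -u := by linarith
  let Bd : ℝ := n * (R * ‖z‖) ^ 2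
  have hBd : 0 ≤ Bd := by positivity
  obtain ⟨τ, hτ, hτ1, hτ2⟩ : ∃ τ : ℝ, 0 < τ ∧ τ * Bd ≤ -u ∧ τ * ‖z‖ ≤ r - ‖v1 - v0‖ := by
    have hρ : 0 < r - ‖v1 - v0‖ := by linarith
    refine ⟨min (-u / (Bd + 1)) ((r - ‖v1 - v0‖) / (‖z‖ + 1)), by positivity, ?_, ?_⟩
    · calc _ ≤ (-u / (Bd + 1)) * (Bd + 1) := by
            gcongr
            · exact min_le_left _ _
            · linarith
        _ = -u := by field_simp
    · calc _ ≤ ((r - ‖v1 - v0‖) / (‖z‖ + 1)) * (‖z‖ + 1) := by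
            gcongr
            · exact min_le_right _ _
            · linarith
        _ = _ := by field_simp
  have hvin : v1 + τ • z ∈ Metric.closedBall v0 r := by
    rw [Metric.mem_closedBall, dist_eq_norm]
    calc ‖v1 + τ • z - v0‖ = ‖(v1 - v0) + τ • z‖ := by congr 1; abel
      _ ≤ ‖v1 - v0‖ + ‖τ • z‖ := norm_add_le _ _
      _ ≤ r := by rw [norm_smul, Real.norm_of_nonneg hτ.le]; linarith
  have hvslice : ⟪v1 + τ • z - v0, v0⟫_ℝ = 0 := by
    have : v1 + τ • z - v0 = (v1 - v0) + τ • z := by abel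
    rw [this, inner_add_left, inner_smul_left, real_inner_comm, real_inner_comm v0 z, hz, hfv0]
    have h1 : ⟪v1 - v0, v0⟫_ℝ = 0 := hv1'
    rw [real_inner_comm] at h1
    simp [h1]
  have hle := hmin' _ hvin hvslice
  have := fun i => hMV i v1 hv1 _ hvin
  choose Y hY e using this
  have e' : ∀ i, h i (v1 + τ • z) = h i v1 + τ * f (Y i) := by
    intro i
    have := e i
    rw [add_sub_cancel_left, inner_smul_right, hz] at this
    linarith
  have hq := hfu (φ Y) ⟨Y, fun i _ => hY i, rfl⟩
  rw [hφ, map_sum] at hq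
  simp only [map_smul, smul_eq_mul] at hq
  have hsq : ∑ i, (f (Y i)) ^ 2 ≤ Bd := by
    calc ∑ i, (f (Y i)) ^ 2 ≤ ∑ i : ι, (R * ‖z‖) ^ 2 := by
          apply Finset.sum_le_sum
          intro i _
          rw [← sq_abs, ← hz]
          gcongr
          exact (abs_real_inner_le_norm _ _).trans (by gcongr; exact hR i _ (hY i).1)
      _ = Bd := by simp [Bd, n]
  have hexp : ∑ i, (h i (v1 + τ • z)) ^ 2 =
      ∑ i, (h i v1) ^ 2 + 2 * τ * ∑ i, h i v1 * f (Y i) + τ ^ 2 * ∑ i, (f (Y i)) ^ 2 := by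
    rw [Finset.mul_sum, Finset.mul_sum, ← Finset.sum_add_distrib, ← Finset.sum_add_distrib]
    refine Finset.sum_congr rfl fun i _ => ?_
    rw [e' i]; ring
  rw [hexp] at hle
  have h1 : τ ^ 2 * ∑ i, (f (Y i)) ^ 2 ≤ τ * (-u) := by
    calc τ ^ 2 * ∑ i, (f (Y i)) ^ 2 ≤ τ ^ 2 * Bd := by gcongr
      _ = τ * (τ * Bd) := by ring
      _ ≤ τ * (-u) := by gcongr
  have h2 : 2 * τ * ∑ i, h i v1 * f (Y i) < 2 * τ * u := by gcongr
  nlinarith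

theorem exist (b : Module.Basis (Option ι) ℝ V) {L : ι → Set V} (hL : ∀ i, Convex ℝ (L i))
    (hLc : ∀ i, IsCompact (L i))
    (hind : ∀ Y : ι → V, (∀ i, Y i ∈ L i) → LinearIndependent ℝ Y) {σ : ℝ} (hσ : σ ≠ 0)
    {h : ι → V → ℝ} (H : ∀ i, SupG (L i) (h i)) :
    ∃ v ∈ Tr b L σ, v ≠ 0 ∧ ∀ i, h i v = 0 := by
  have hne : ∀ i, ∃ c, c ∈ L i := fun i => by
    obtain ⟨m, hm, _⟩ := H i 0
    exact ⟨m, hm⟩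
  choose c hc using hne
  let hs : ℝ → ι → V → ℝ := fun s i v => (1 - s) * ⟪c i, v⟫_ℝ + s * h i v
  have hcont : ∀ i, Continuous (h i) := fun i => (H i).cont (hL i) (hLc i)
  have Hs : ∀ s ∈ Icc (0 : ℝ) 1, ∀ i, SupG (L i) (hs s i) := by
    intro s hs' i v
    obtain ⟨m, hm, e, l⟩ := H i v
    refine ⟨(1 - s) • c i + s • m, hL i (hc i) hm (by linarith [hs'.2]) hs'.1 (by ring), ?_, ?_⟩
    · rw [inner_add_left, real_inner_smul_left, real_inner_smul_left, e]
    · intro v'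
      rw [inner_add_left, real_inner_smul_left, real_inner_smul_left]
      have := mul_le_mul_of_nonneg_left (l v') hs'.1
      simp only [hs]
      linarith
  let S : Set ℝ := {s | ∃ v ∈ Metric.sphere (0 : V) 1, (∀ i, hs s i v = 0) ∧ v ∈ Tr b L σ}
  have hSc : IsClosed S := by
    have : CompactSpace (Metric.sphere (0 : V) 1) :=
      isCompact_iff_compactSpace.1 (isCompact_sphere _ _)
    have hcl : IsClosed {p : (Metric.sphere (0 : V) 1) × ℝ | (∀ i, hs p.2 i p.1 = 0) ∧
        (p.1 : V) ∈ Tr b L σ} := by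
      rw [Set.ofPred_and]
      refine IsClosed.inter ?_ ?_
      · rw [Set.ofPred_forall]
        refine isClosed_iInter fun i => isClosed_eq ?_ continuous_const
        simp only [hs]
        have := hcont i
        fun_prop
      · exact (Tr_closed b hLc σ).preimage (continuous_subtype_val.comp continuous_fst)
    have := isClosedMap_snd_of_compactSpace (X := Metric.sphere (0 : V) 1) (Y := ℝ) _ hcl
    convert this using 1
    ext s
    simp only [S, mem_ofPred_eq, mem_image, Prod.exists, Subtype.exists]
    constructor
    · rintro ⟨v, hv, h⟩
      exact ⟨v, hv, s, h, rfl⟩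
    · rintro ⟨v, hv, w, h, rfl⟩
      exact ⟨v, hv, h⟩
  -- normalisation
  have norm_mem : ∀ s ∈ Icc (0 : ℝ) 1, ∀ v : V, v ≠ 0 → (∀ i, hs s i v = 0) → v ∈ Tr b L σ →
      s ∈ S := by
    intro s hs' v hv hz hT
    have hp : 0 < ‖v‖ := norm_pos_iff.2 hv
    refine ⟨‖v‖⁻¹ • v, ?_, fun i => ?_, Tr_smul b (by positivity) hT⟩
    · rw [mem_sphere_zero_iff_norm, norm_smul, norm_inv, norm_norm, inv_mul_cancel₀ hp.ne']
    · rw [(Hs s hs' i).smul _ (by positivity), hz, mul_zero]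
  have h0S : (0 : ℝ) ∈ S := by
    have hex : ∃ v : V, v ≠ 0 ∧ ∀ i, ⟪c i, v⟫_ℝ = 0 := by
      have : (Submodule.span ℝ (range c))ᗮ ≠ ⊥ := by
        intro h
        rw [Submodule.orthogonal_eq_bot_iff] at h
        have h1 := finrank_range_le_card (R := ℝ) c
        unfold Set.finrank at h1
        rw [h, finrank_top, Module.finrank_eq_card_basis b, Fintype.card_option] at h1
        omega
      obtain ⟨v, hv, hv0⟩ := Submodule.exists_mem_ne_zero_of_ne_bot this
      exact ⟨v, hv0, fun i => (Submodule.mem_orthogonal _ _).1 hv _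
        (Submodule.subset_span (mem_range_self i))⟩
    obtain ⟨v, hv, hv0⟩ := hex
    have h01 : (0 : ℝ) ∈ Icc (0 : ℝ) 1 := by simp
    rcases Tr_cover b σ hc hv0 with hT | hT
    · exact norm_mem 0 h01 v hv (fun i => by simp [hs, hv0]) hT
    · refine norm_mem 0 h01 (-v) (neg_ne_zero.2 hv) (fun i => by simp [hs, hv0]) ?_
      simpa using Tr_neg b hT
  have hsub : Icc (0 : ℝ) 1 ⊆ S := by
    refine (hSc.inter isClosed_Icc).Icc_subset_of_forall_exists_gt h0S ?_
    rintro s ⟨⟨v0, hv0, hz0, hT0⟩, hs01⟩ s' hs'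
    have hsI : s ∈ Icc (0 : ℝ) 1 := ⟨hs01.1, hs01.2.le⟩
    have hv0n : ‖v0‖ = 1 := by simpa using hv0
    have hv0' : v0 ≠ 0 := by
      intro h; simp [h] at hv0n
    -- neighbourhood avoiding zero and the opposite orientation
    have hopen : IsOpen ((Tr b L (-σ))ᶜ ∩ {0}ᶜ) :=
      (Tr_closed b hLc (-σ)).isOpen_compl.inter isOpen_compl_singleton
    obtain ⟨δ, hδ, hball⟩ := Metric.isOpen_iff.1 hopen v0
      ⟨fun h => hv0' (Tr_disj b hL hind hσ hT0 h), hv0'⟩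
    obtain ⟨η, hη, hst⟩ := stable b hL hLc hind (Hs s hsI) hv0' hz0 hδ
    -- bound for the variation in the parameter
    obtain ⟨M, hM0, hM⟩ : ∃ M : ℝ, 0 < M ∧ ∀ i, ∀ v ∈ Metric.closedBall v0 1,
        |h i v - ⟪c i, v⟫_ℝ| ≤ M := by
      have : Continuous (fun v : V => fun i => h i v - ⟪c i, v⟫_ℝ) := by fun_prop
      obtain ⟨M, hM⟩ := ((isCompact_closedBall v0 1).image this).isBounded.exists_norm_le
      refine ⟨max M 1, by positivity, fun i v hv => ?_⟩
      have h1 := hM _ ⟨v, hv, rfl⟩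
      exact ((norm_le_pi_norm (fun i => h i v - ⟪c i, v⟫_ℝ) i).trans h1).trans (le_max_left _ _)
    have hs's : s < s' := hs'
    let s1 := s + min (min (s' - s) (1 - s)) (η / M)
    have hpos : 0 < min (min (s' - s) (1 - s)) (η / M) := by
      have : 0 < s' - s := by linarith
      have : 0 < 1 - s := by linarith [hs01.2]
      positivity
    have hle1 : min (min (s' - s) (1 - s)) (η / M) ≤ s' - s :=
      (min_le_left _ _).trans (min_le_left _ _)
    have hle2 : min (min (s' - s) (1 - s)) (η / M) ≤ 1 - s :=
      (min_le_left _ _).trans (min_le_right _ _)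
    have hle3 : min (min (s' - s) (1 - s)) (η / M) * M ≤ η := by
      rw [← le_div_iff₀ hM0]; exact min_le_right _ _
    have hs1I : s1 ∈ Icc (0 : ℝ) 1 := ⟨by simp only [s1]; linarith [hs01.1], by
      simp only [s1]; linarith⟩
    obtain ⟨v1, hd, hz1⟩ := hst (hs s1) (Hs s1 hs1I) (by
      intro i v hv
      have : hs s1 i v - hs s i v =
          min (min (s' - s) (1 - s)) (η / M) * (h i v - ⟪c i, v⟫_ℝ) := by
        simp only [hs, s1]; ring
      rw [this, abs_mul, abs_of_pos hpos]
      exact (mul_le_mul_of_nonneg_left (hM i v hv) hpos.le).trans hle3)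
    obtain ⟨hv1T, hv1z⟩ := hball (Metric.mem_ball.2 hd)
    refine ⟨s1, norm_mem s1 hs1I v1 hv1z hz1 ?_, ⟨by simp only [s1]; linarith, by
      simp only [s1]; linarith⟩⟩
    have : ∀ i, ∃ y ∈ L i, ⟪y, v1⟫_ℝ = 0 := by
      intro i
      obtain ⟨m, hm, e, _⟩ := Hs s1 hs1I i v1
      exact ⟨m, hm, e.trans (hz1 i)⟩
    choose Y hY hY0 using this
    exact (Tr_cover b σ hY hY0).resolve_right hv1T
  obtain ⟨v, hv, hz, hT⟩ := hsub (show (1 : ℝ) ∈ Icc (0 : ℝ) 1 by simp)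
  refine ⟨v, hT, ?_, fun i => by simpa [hs] using hz i⟩
  rintro rfl
  simp at hv

theorem exists_supG {L : Set V} (hLc : IsCompact L) (hne : L.Nonempty) :
    ∃ h : V → ℝ, SupG L h ∧
      ∀ v, h v = 0 ↔ (∀ y ∈ L, 0 ≤ ⟪y, v⟫_ℝ) ∧ ∃ y ∈ L, ⟪y, v⟫_ℝ = 0 := by
  have : ∀ v : V, ∃ m ∈ L, ∀ y ∈ L, ⟪m, v⟫_ℝ ≤ ⟪y, v⟫_ℝ := by
    intro v
    obtain ⟨m, hm, hmin⟩ := hLc.exists_isMinOn hne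
      (f := fun y => ⟪y, v⟫_ℝ) (by fun_prop)
    exact ⟨m, hm, fun y hy => hmin hy⟩
  choose m hm hmin using this
  refine ⟨fun v => ⟪m v, v⟫_ℝ, fun v => ⟨m v, hm v, rfl, fun v' => hmin v' _ (hm v)⟩, fun v => ?_⟩
  constructor
  · intro h
    exact ⟨fun y hy => h ▸ hmin v y hy, m v, hm v, h⟩
  · rintro ⟨h1, y, hy, h2⟩
    exact le_antisymm (h2 ▸ hmin v y hy) (h1 _ (hm v))

end Bisz

theorem bisztriczky_per_partition {d : ℕ}
    (K : Fin d → Set (EuclideanSpace ℝ (Fin d)))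
    (hcomp : ∀ i, IsCompact (K i)) (hconv : ∀ i, Convex ℝ (K i))
    (hint : ∀ i, (interior (K i)).Nonempty)
    (hsep : StronglySeparated K)
    (A B : Finset (Fin d)) (hdisj : Disjoint A B) (hunion : A ∪ B = Finset.univ) :
    {p : EuclideanSpace ℝ (Fin d) × ℝ | ‖p.1‖ = 1 ∧
        (∀ i : Fin d, ({x | ⟪p.1, x⟫_ℝ = p.2} ∩ K i).Nonempty) ∧
        (∀ a ∈ A, K a ⊆ {x | p.2 ≤ ⟪p.1, x⟫_ℝ}) ∧
        (∀ b ∈ B, K b ⊆ {x | ⟪p.1, x⟫_ℝ ≤ p.2})}.encard = 2 := by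
  let E := EuclideanSpace ℝ (Fin d)
  let V := WithLp 2 (E × ℝ)
  let ε : Fin d → ℝ := fun i => if i ∈ A then 1 else -1
  have hε : ∀ i, ε i ≠ 0 := by
    intro i
    simp only [ε]
    split_ifs <;> norm_num
  have hne : ∀ i, (K i).Nonempty := fun i => (hint i).mono interior_subset
  let lift : Fin d → E → V := fun i x => ε i • WithLp.toLp 2 (x, (-1 : ℝ))
  have hlift : ∀ i x (u : E) (α : ℝ), ⟪lift i x, (WithLp.toLp 2 (u, α) : V)⟫_ℝ
      = ε i * (⟪u, x⟫_ℝ - α) := by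
    intro i x u α
    simp only [lift]
    rw [real_inner_smul_left, WithLp.prod_inner_apply]
    simp only [real_inner_comm]
    simp
    left; ring
  let L : Fin d → Set V := fun i => lift i '' K i
  have hLc : ∀ i, IsCompact (L i) := by
    intro i
    refine (hcomp i).image ?_
    have : Continuous (fun x : E => (WithLp.toLp 2 (x, (-1 : ℝ)) : V)) :=
      (WithLp.prod_continuous_toLp 2 E ℝ).comp (by fun_prop)
    exact this.const_smul (ε i)
  have hL : ∀ i, Convex ℝ (L i) := by
    rintro i _ ⟨x, hx, rfl⟩ _ ⟨y, hy, rfl⟩ a b ha hb hab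
    refine ⟨a • x + b • y, hconv i hx hy ha hb hab, ?_⟩
    simp only [lift]
    rw [smul_comm a, smul_comm b, ← smul_add]
    congr 1
    rw [← WithLp.toLp_smul, ← WithLp.toLp_smul, ← WithLp.toLp_add]
    congr 1
    ext1
    · rfl
    · show (-1 : ℝ) = a * (-1) + b * (-1)
      linarith
  have hind : ∀ Y : Fin d → V, (∀ i, Y i ∈ L i) → LinearIndependent ℝ Y := by
    intro Y hY
    choose x hx hxY using hY
    rw [Fintype.linearIndependent_iff]
    intro g hg
    obtain ⟨u, α, -, h1, h2⟩ := hsep (Finset.univ.filter fun i => g i * ε i < 0)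
    have hsum : ∑ i, g i * ε i * (⟪u, x i⟫_ℝ - α) = 0 := by
      have this : ⟪∑ i, g i • Y i, (WithLp.toLp 2 (u, α) : V)⟫_ℝ = 0 := by
        rw [hg, inner_zero_left]
      rw [sum_inner] at this
      rw [← this]
      refine Finset.sum_congr rfl fun i _ => ?_
      rw [real_inner_smul_left, ← hxY i, hlift]; ring
    have hterm : ∀ i, g i * ε i ≠ 0 → 0 < g i * ε i * (⟪u, x i⟫_ℝ - α) := by
      intro i hi
      rcases lt_or_gt_of_ne hi with h | h
      · have := h1 i (by simpa using h) (x i) (hx i)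
        exact mul_pos_of_neg_of_neg h (by linarith)
      · have := h2 i (by simpa using h.le) (x i) (hx i)
        exact mul_pos h (by linarith)
    have hnn : ∀ i ∈ Finset.univ, 0 ≤ g i * ε i * (⟪u, x i⟫_ℝ - α) := by
      intro i _
      by_cases hi : g i * ε i = 0
      · simp [hi]
      · exact (hterm i hi).le
    have hz := (Finset.sum_eq_zero_iff_of_nonneg hnn).1 hsum
    intro i
    by_contra hgi
    exact (hterm i (mul_ne_zero hgi (hε i))).ne' (hz i (Finset.mem_univ i))
  have hfr : Module.finrank ℝ V = d + 1 := by
    rw [(WithLp.linearEquiv 2 ℝ (E × ℝ)).finrank_eq, Module.finrank_prod]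
    simp [E]
  let b : Module.Basis (Option (Fin d)) ℝ V :=
    (Module.finBasisOfFinrankEq ℝ V hfr).reindex
      (Fintype.equivOfCardEq (by simp))
  have hLne : ∀ i, (L i).Nonempty := fun i => (hne i).image _
  choose h H hz using fun i => Bisz.exists_supG (hLc i) (hLne i)
  -- membership
  have hmem : ∀ (u : E) (α : ℝ), (∀ i, h i (WithLp.toLp 2 (u, α)) = 0) ↔
      (∀ i : Fin d, ({x | ⟪u, x⟫_ℝ = α} ∩ K i).Nonempty) ∧
        (∀ a ∈ A, K a ⊆ {x | α ≤ ⟪u, x⟫_ℝ}) ∧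
        (∀ b ∈ B, K b ⊆ {x | ⟪u, x⟫_ℝ ≤ α}) := by
    intro u α
    simp only [hz, L, Set.forall_mem_image, Set.exists_mem_image, hlift]
    constructor
    · intro hh
      refine ⟨fun i => ?_, fun i hi x hx => ?_, fun i hi x hx => ?_⟩
      · obtain ⟨x, hx, hx0⟩ := (hh i).2
        refine ⟨x, ?_, hx⟩
        have := (mul_eq_zero.1 hx0).resolve_left (hε i)
        exact sub_eq_zero.1 this
      · have := (hh i).1 hx
        simp only [ε, if_pos hi] at this
        show α ≤ ⟪u, x⟫_ℝ
        linarith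
      · have := (hh i).1 hx
        have hi' : i ∉ A := fun h => Finset.disjoint_left.1 hdisj h hi
        simp only [ε, if_neg hi'] at this
        show ⟪u, x⟫_ℝ ≤ α
        linarith
    · rintro ⟨h1, h2, h3⟩ i
      refine ⟨fun x hx => ?_, ?_⟩
      · by_cases hi : i ∈ A
        · have : α ≤ ⟪u, x⟫_ℝ := h2 i hi hx
          simp only [ε, if_pos hi]
          linarith
        · have hB : i ∈ B := by
            have := hunion ▸ Finset.mem_univ i
            exact (Finset.mem_union.1 this).resolve_left hi
          have : ⟪u, x⟫_ℝ ≤ α := h3 i hB hx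
          simp only [ε, if_neg hi]
          linarith
      · obtain ⟨x, hx, hxK⟩ := h1 i
        refine ⟨x, hxK, ?_⟩
        have : ⟪u, x⟫_ℝ = α := hx
        rw [this]; simp
  -- the dimension is positive
  have hd : Nonempty (Fin d) := by
    obtain ⟨u, α, hu, -⟩ := hsep ∅
    by_contra hemp
    rw [not_nonempty_iff] at hemp
    exact hu (Subsingleton.elim _ _)
  -- existence, normalised
  have hex : ∀ σ : ℝ, σ ≠ 0 → ∃ p : E × ℝ, ‖p.1‖ = 1 ∧ (WithLp.toLp 2 p : V) ∈ Bisz.Tr b L σ ∧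
      ∀ i, h i (WithLp.toLp 2 p) = 0 := by
    intro σ hσ
    obtain ⟨v, hT, hv0, hv⟩ := Bisz.exist b hL hLc hind hσ H
    obtain ⟨⟨u, α⟩, rfl⟩ : ∃ p : E × ℝ, v = WithLp.toLp 2 p := ⟨v.ofLp, rfl⟩
    have hu : u ≠ 0 := by
      rintro rfl
      apply hv0
      obtain ⟨i⟩ := hd
      obtain ⟨x, hx, -⟩ := ((hmem 0 α).1 hv).1 i
      have : ⟪(0 : E), x⟫_ℝ = α := hx
      rw [inner_zero_left] at this
      rw [← this]
      rfl
    have hp : 0 < ‖u‖ := norm_pos_iff.2 hu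
    refine ⟨‖u‖⁻¹ • (u, α), ?_, ?_, fun i => ?_⟩
    · simp only [Prod.smul_fst]
      rw [norm_smul, norm_inv, norm_norm, inv_mul_cancel₀ hp.ne']
    · rw [WithLp.toLp_smul]
      exact Bisz.Tr_smul b (by positivity) hT
    · rw [WithLp.toLp_smul, (H i).smul _ (by positivity), hv, mul_zero]
  have huniq : ∀ σ : ℝ, σ ≠ 0 → ∀ p q : E × ℝ, ‖p.1‖ = 1 → ‖q.1‖ = 1 →
      (WithLp.toLp 2 p : V) ∈ Bisz.Tr b L σ → (WithLp.toLp 2 q : V) ∈ Bisz.Tr b L σ →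
      (∀ i, h i (WithLp.toLp 2 p) = 0) → (∀ i, h i (WithLp.toLp 2 q) = 0) → p = q := by
    intro σ hσ p q hp hq hpT hqT hp0 hq0
    obtain ⟨t, ht, e⟩ := Bisz.uniq b hL hLc hind hσ H hpT hqT hp0 hq0
    rw [← WithLp.toLp_smul, ← WithLp.toLp_smul] at e
    have e' : (1 - t) • p = t • q := congrArg WithLp.ofLp e
    have e1 := congrArg (fun p : E × ℝ => ‖p.1‖) e'
    simp only [Prod.smul_fst, norm_smul, hp, hq, Real.norm_eq_abs, mul_one] at e1
    rw [abs_of_nonneg (by linarith [ht.2]), abs_of_nonneg ht.1] at e1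
    rw [e1] at e'
    exact smul_right_injective _ (by linarith : t ≠ 0) e'
  obtain ⟨p, hp1, hpT, hp0⟩ := hex 1 one_ne_zero
  obtain ⟨q, hq1, hqT, hq0⟩ := hex (-1) (by norm_num)
  rw [Set.encard_eq_two]
  refine ⟨p, q, ?_, ?_⟩
  · rintro rfl
    have h0 : (WithLp.toLp 2 p : V) = 0 := Bisz.Tr_disj b hL hind one_ne_zero hpT hqT
    have : p = 0 := congrArg WithLp.ofLp h0
    rw [this] at hp1
    simp at hp1
  · ext r
    constructor
    · rintro ⟨hr1, hr⟩
      have hr0 := (hmem r.1 r.2).2 hr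
      have : ∀ i, ∃ y ∈ L i, ⟪y, (WithLp.toLp 2 r : V)⟫_ℝ = 0 := fun i =>
        ((hz i _).1 (hr0 i)).2
      choose Y hY hY0 using this
      rcases Bisz.Tr_cover b 1 hY hY0 with hT | hT
      · exact Or.inl (huniq 1 one_ne_zero r p hr1 hp1 hT hpT hr0 hp0)
      · exact Or.inr (huniq (-1) (by norm_num) r q hr1 hq1 hT hqT hr0 hq0)
    · rintro (rfl | rfl)
      · exact ⟨hp1, (hmem _ _).1 hp0⟩
      · exact ⟨hq1, (hmem _ _).1 hq0⟩
end

section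
/- (Bisztriczky's theorem, total count.) Let K₁,…,K_d be a strongly separated family of convex bodies in ℝ^d. Then the collection of affine hyperplanes of ℝ^d that are tangent to every Kᵢ (that is, sets H = {x : ⟨u,x⟩ = α} for some nonzero u and α, such that for every i, H ∩ Kᵢ ≠ ∅ and Kᵢ lies in one of the two closed half-spaces bounded by H) has exactly 2^d elements. -/
open scoped InnerProductSpace

lemma btc_det_ne {d : ℕ} (y : Fin d → Fin (d+1) → ℝ) (v : Fin (d+1) → ℝ)
    (hy : LinearIndependent ℝ y) (hv : v ≠ 0) (ho : ∀ i, y i ⬝ᵥ v = 0) :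
    (Matrix.of (Fin.cons v y : Fin (d+1) → Fin (d+1) → ℝ)).det ≠ 0 := by
  have h : LinearIndependent ℝ (Fin.cons v y : Fin (d+1) → Fin (d+1) → ℝ) := by
    rw [linearIndependent_finCons]
    refine ⟨hy, fun hm => hv ?_⟩
    have : ∀ z ∈ Submodule.span ℝ (Set.range y), z ⬝ᵥ v = 0 := by
      intro z hz
      induction hz using Submodule.span_induction with
      | mem x hx => obtain ⟨i, rfl⟩ := hx; exact ho i
      | zero => simp
      | add a b _ _ ha hb => rw [add_dotProduct, ha, hb, add_zero]
      | smul c a _ ha => rw [smul_dotProduct, ha, smul_zero]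
    exact dotProduct_self_eq_zero.mp (this v hm)
  have h2 := Matrix.linearIndependent_rows_iff_isUnit (A := Matrix.of (Fin.cons v y : Fin (d+1) → Fin (d+1) → ℝ)).mp h
  rw [Matrix.isUnit_iff_isUnit_det] at h2
  exact h2.ne_zero

/-- oriented determinant -/
noncomputable def btcD {d : ℕ} (v : Fin (d+1) → ℝ) (y : Fin d → Fin (d+1) → ℝ) : ℝ :=
  (Matrix.of (Fin.cons v y : Fin (d+1) → Fin (d+1) → ℝ)).det

lemma btcD_smul {d : ℕ} (c : ℝ) (v : Fin (d+1) → ℝ) (y : Fin d → Fin (d+1) → ℝ) :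
    btcD (c • v) y = c * btcD v y := by
  have := Matrix.det_updateRow_smul (Matrix.of (Fin.cons v y : Fin (d+1) → Fin (d+1) → ℝ)) 0 c v
  have e : ∀ w : Fin (d+1) → ℝ, Matrix.updateRow (Matrix.of (Fin.cons v y : Fin (d+1) → Fin (d+1) → ℝ)) 0 w
      = Matrix.of (Fin.cons w y : Fin (d+1) → Fin (d+1) → ℝ) := by
    intro w; ext i j
    refine Fin.cases ?_ (fun i => ?_) i <;> simp [Matrix.updateRow_apply]
  rw [e, e] at this
  exact this

lemma btcD_ne_v {d : ℕ} {v : Fin (d+1) → ℝ} {y : Fin d → Fin (d+1) → ℝ} (h : 0 < btcD v y) : v ≠ 0 := by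
  rintro rfl
  have := btcD_smul 0 0 y
  simp at this
  linarith

lemma btc_core {d : ℕ} (L : Fin d → Set (Fin (d+1) → ℝ)) (hconv : ∀ i, Convex ℝ (L i))
    (hind : ∀ y : Fin d → Fin (d+1) → ℝ, (∀ i, y i ∈ L i) → LinearIndependent ℝ y)
    (y y' : Fin d → Fin (d+1) → ℝ) (v w : Fin (d+1) → ℝ)
    (hy : ∀ i, y i ∈ L i) (hy' : ∀ i, y' i ∈ L i)
    (hv : ∀ i, y i ⬝ᵥ v = 0) (hw : ∀ i, y' i ⬝ᵥ w = 0)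
    (A B κ : Fin d → ℝ) (hA : ∀ i, 0 < A i) (hB : ∀ i, 0 < B i)
    (ha : ∀ i, y' i ⬝ᵥ v = κ i * A i) (hb : ∀ i, y i ⬝ᵥ w = κ i * B i)
    (hDv : 0 < btcD v y) (hDw : 0 < btcD w y') : ∃ c : ℝ, 0 < c ∧ v = c • w := by
  by_contra hcon
  have hden : ∀ i, ∀ s ∈ Set.Icc (0:ℝ) 1, 0 < (1 - s) * A i + s * B i := by
    intro i s hs
    rcases eq_or_lt_of_le hs.1 with h | h
    · subst h; simpa using hA i
    · have := mul_pos h (hB i)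
      have := mul_nonneg (sub_nonneg.mpr hs.2) (hA i).le
      linarith
  let τ : Fin d → ℝ → ℝ := fun i s => s * B i / ((1 - s) * A i + s * B i)
  let Y : ℝ → Fin d → Fin (d+1) → ℝ := fun s i => (1 - τ i s) • y i + τ i s • y' i
  let Z : ℝ → Fin (d+1) → ℝ := fun s => (1 - s) • v - s • w
  have hτc : ∀ i, ContinuousOn (τ i) (Set.Icc 0 1) := by
    intro i
    refine ContinuousOn.div (by fun_prop) (by fun_prop) (fun s hs => (hden i s hs).ne')
  have hcont : ContinuousOn (fun s => btcD (Z s) (Y s)) (Set.Icc 0 1) := by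
    unfold btcD
    have : ContinuousOn (fun s => (Matrix.of (Fin.cons (Z s) (Y s) : Fin (d+1) → Fin (d+1) → ℝ)))
        (Set.Icc 0 1) := by
      refine continuousOn_pi.mpr fun i => ?_
      refine Fin.cases ?_ (fun i => ?_) i
      · show ContinuousOn (fun s => Z s) _
        exact Continuous.continuousOn (by fun_prop)
      · show ContinuousOn (fun s => Y s i) _
        have := hτc i
        exact ((continuousOn_const.sub this).smul continuousOn_const).add (this.smul continuousOn_const)
    exact (Continuous.matrix_det continuous_id).comp_continuousOn this
  have hY0 : Y 0 = y := by funext i; simp [Y, τ]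
  have hY1 : Y 1 = y' := by funext i; simp [Y, τ, (hB i).ne']
  have h0 : 0 < btcD (Z 0) (Y 0) := by rw [hY0]; simpa [Z] using hDv
  have h1 : btcD (Z 1) (Y 1) < 0 := by
    rw [hY1]
    have := btcD_smul (-1) w y'
    have e : Z 1 = (-1 : ℝ) • w := by simp [Z]
    rw [e, this]; linarith
  obtain ⟨s, hs, hs0⟩ := intermediate_value_Icc' (zero_le_one) hcont ⟨h1.le, h0.le⟩
  refine btc_det_ne (Y s) (Z s) ?_ ?_ ?_ hs0
  · refine hind _ fun i => hconv i (hy i) (hy' i) ?_ ?_ (by ring)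
    · have := hden i s hs
      rw [sub_nonneg, div_le_one this]
      nlinarith [mul_nonneg (sub_nonneg.mpr hs.2) (hA i).le]
    · exact div_nonneg (mul_nonneg hs.1 (hB i).le) (hden i s hs).le
  · intro hz
    have hz' : (1 - s) • v = s • w := sub_eq_zero.mp hz
    have hs1 : s ≠ 1 := by
      rintro rfl
      exact btcD_ne_v hDw (by simpa using hz'.symm)
    have hs00 : s ≠ 0 := by
      rintro rfl
      exact btcD_ne_v hDv (by simpa using hz')
    have p1 : 0 < 1 - s := sub_pos.mpr (lt_of_le_of_ne hs.2 hs1)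
    have p0 : 0 < s := lt_of_le_of_ne hs.1 (Ne.symm hs00)
    refine hcon ⟨s / (1 - s), by positivity, ?_⟩
    rw [div_eq_inv_mul, mul_smul, ← hz', smul_smul, inv_mul_cancel₀ p1.ne', one_smul]
  · intro i
    have := (hden i s hs).ne'
    simp only [Y, Z, add_dotProduct, smul_dotProduct, dotProduct_sub, dotProduct_smul, hv, hw, ha, hb, τ, smul_eq_mul]
    field_simp
    ring

lemma btc_path {d : ℕ} (L : Fin d → Set (Fin (d+1) → ℝ)) (hconv : ∀ i, Convex ℝ (L i))
    (hind : ∀ y : Fin d → Fin (d+1) → ℝ, (∀ i, y i ∈ L i) → LinearIndependent ℝ y)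
    (y y' : Fin d → Fin (d+1) → ℝ) (v w : Fin (d+1) → ℝ)
    (hy : ∀ i, y i ∈ L i) (hy' : ∀ i, y' i ∈ L i)
    (hv : ∀ i, y i ⬝ᵥ v = 0) (hw : ∀ i, y' i ⬝ᵥ w = 0)
    (hab : ∀ i, 0 ≤ (y' i ⬝ᵥ v) * (y i ⬝ᵥ w))
    (hDv : 0 < btcD v y) (hDw : 0 < btcD w y') : ∃ c : ℝ, 0 < c ∧ v = c • w := by
  classical
  -- segment lemma
  have seg : ∀ (v : Fin (d+1) → ℝ) (y y' : Fin d → Fin (d+1) → ℝ), (∀ i, y i ∈ L i) →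
      (∀ i, y' i ∈ L i) → (∀ i, y i ⬝ᵥ v = 0) → (∀ i, y' i ⬝ᵥ v = 0) → 0 < btcD v y →
      0 < btcD v y' := by
    intro v y y' hy hy' hv hv' hD
    have hne := btc_det_ne y' v (hind y' hy') (btcD_ne_v hD) hv'
    by_contra hcon
    have hneg : 0 < btcD ((-1:ℝ) • v) y' := by
      rw [btcD_smul]
      have : btcD v y' < 0 := lt_of_le_of_ne (not_lt.mp hcon) hne
      linarith
    obtain ⟨c, hc, h⟩ := btc_core L hconv hind y y' v ((-1:ℝ) • v) hy hy' hv
      (by intro i; simp [hv']) (fun _ => 1) (fun _ => 1) (fun _ => 0) (by simp) (by simp)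
      (by simp [hv']) (by simp [hv]) hD hneg
    have h2 : (1 + c) • v = 0 := by
      rw [add_smul, one_smul]; nth_rewrite 1 [h]; simp
    rcases smul_eq_zero.mp h2 with h3 | h3
    · linarith
    · exact btcD_ne_v hD h3
  let z : Fin d → Fin (d+1) → ℝ := fun i => if y' i ⬝ᵥ v = 0 then y' i else y i
  let z' : Fin d → Fin (d+1) → ℝ := fun i => if y' i ⬝ᵥ v ≠ 0 ∧ y i ⬝ᵥ w = 0 then y i else y' i
  have hz : ∀ i, z i ∈ L i := by intro i; simp only [z]; split_ifs <;> simp [hy, hy']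
  have hz' : ∀ i, z' i ∈ L i := by intro i; simp only [z']; split_ifs <;> simp [hy, hy']
  have hzv : ∀ i, z i ⬝ᵥ v = 0 := by intro i; simp only [z]; split_ifs with h <;> simp [hv, h]
  have hzw : ∀ i, z' i ⬝ᵥ w = 0 := by intro i; simp only [z']; split_ifs with h <;> simp [hw, h]
  have D1 := seg v y z hy hz hv hzv hDv
  have D2 := seg w y' z' hy' hz' hw hzw hDw
  have key : ∀ i, ∃ A B κ : ℝ, 0 < A ∧ 0 < B ∧ z' i ⬝ᵥ v = κ * A ∧ z i ⬝ᵥ w = κ * B := by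
    intro i
    by_cases h1 : y' i ⬝ᵥ v = 0
    · exact ⟨1, 1, 0, one_pos, one_pos, by simp [z', h1], by simp [z, h1, hw]⟩
    by_cases h2 : y i ⬝ᵥ w = 0
    · exact ⟨1, 1, 0, one_pos, one_pos, by simp [z', h1, h2, hv], by simp [z, h1, h2]⟩
    have e1 : z' i = y' i := by simp [z', h2]
    have e2 : z i = y i := by simp [z, h1]
    rw [e1, e2]
    have h := hab i
    rcases lt_or_gt_of_ne h1 with h3 | h3
    · refine ⟨-(y' i ⬝ᵥ v), -(y i ⬝ᵥ w), -1, by linarith, ?_, by ring, by ring⟩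
      have : y i ⬝ᵥ w < 0 := lt_of_le_of_ne (by nlinarith) h2
      linarith
    · refine ⟨(y' i ⬝ᵥ v), (y i ⬝ᵥ w), 1, by linarith, ?_, by ring, by ring⟩
      exact lt_of_le_of_ne (by nlinarith) (Ne.symm h2)
  choose A B κ hA hB ha hb using key
  exact btc_core L hconv hind z z' v w hz hz' hzv hzw A B κ hA hB ha hb D1 D2

lemma btc_berge {E ι : Type*} [NormedAddCommGroup E] [NormedSpace ℝ E] [DecidableEq ι]
    (s : Finset ι) : s.Nonempty → ∀ (C : ι → Set E), (∀ i, IsCompact (C i)) → (∀ i, Convex ℝ (C i)) →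
    Convex ℝ (⋃ i ∈ s, C i) →
    (∀ t, t ⊂ s → ((⋃ i ∈ s, C i) ∩ ⋂ i ∈ t, C i).Nonempty) →
    ((⋃ i ∈ s, C i) ∩ ⋂ i ∈ s, C i).Nonempty := by
  induction s using Finset.induction_on with
  | empty => intro h; simp at h
  | insert a s has ih =>
    intro _ C hC hconv hU ht
    rcases s.eq_empty_or_nonempty with rfl | hs
    · have := ht ∅ (by simp)
      simpa using this
    by_contra hcon
    have hdisj : Disjoint (C a) (⋂ i ∈ s, C i) := by
      rw [Set.disjoint_left]
      intro x hx hx2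
      refine hcon ⟨x, ?_, ?_⟩
      · simp [hx]
      · simp only [Finset.mem_insert, Set.iInter_iInter_eq_or_left]; exact ⟨hx, hx2⟩
    obtain ⟨f, u, u', h1, h2, h3⟩ := geometric_hahn_banach_compact_closed (hconv a) (hC a)
      (convex_iInter fun i => convex_iInter fun _ => hconv i)
      (isClosed_iInter fun i => isClosed_iInter fun _ => (hC i).isClosed) hdisj
    have hHc : IsClosed {x : E | f x = u} := isClosed_eq f.continuous continuous_const
    have hHv : Convex ℝ {x : E | f x = u} := convex_hyperplane (f.isLinear) u
    have hUe : (⋃ i ∈ s, C i ∩ {x : E | f x = u}) = (⋃ i ∈ insert a s, C i) ∩ {x | f x = u} := by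
      ext x
      simp only [Set.mem_iUnion, Set.mem_inter_iff, Finset.mem_insert, Set.mem_ofPred_eq]
      constructor
      · rintro ⟨i, hi, hx, hf⟩; exact ⟨⟨i, Or.inr hi, hx⟩, hf⟩
      · rintro ⟨⟨i, rfl | hi, hx⟩, hf⟩
        · have := h1 x hx; linarith
        · exact ⟨i, hi, hx, hf⟩
    have := ih hs (fun i => C i ∩ {x | f x = u}) (fun i => (hC i).inter_right hHc)
      (fun i => (hconv i).inter hHv) (by rw [hUe]; exact hU.inter hHv) ?_
    · obtain ⟨x, hx1, hx2⟩ := this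
      have hx3 : x ∈ ⋂ i ∈ s, C i := by
        simp only [Set.mem_iInter] at hx2 ⊢
        exact fun i hi => (hx2 i hi).1
      obtain ⟨i, hi⟩ := hs
      simp only [Set.mem_iInter] at hx2
      have h4 : f x = u := (hx2 i hi).2
      have := h3 x hx3
      linarith
    · intro t hts
      obtain ⟨p, hp1, hp2⟩ := ht (insert a t) (by
        refine ⟨Finset.insert_subset_insert _ hts.1, fun h => hts.2 ?_⟩
        intro x hx
        have := h (Finset.mem_insert_of_mem hx)
        rcases Finset.mem_insert.mp this with rfl | h
        · exact absurd hx has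
        · exact h)
      obtain ⟨q, hq1, hq2⟩ := ht s (Finset.ssubset_insert has)
      have hfp : f p < u := h1 p (by
        simp only [Set.mem_iInter] at hp2; exact hp2 a (Finset.mem_insert_self _ _))
      have hfq : u < f q := h2.trans (h3 q hq2)
      have hDc : Convex ℝ ((⋃ i ∈ insert a s, C i) ∩ ⋂ i ∈ t, C i) :=
        hU.inter (convex_iInter fun i => convex_iInter fun _ => hconv i)
      have hpD : p ∈ ((⋃ i ∈ insert a s, C i) ∩ ⋂ i ∈ t, C i) := by
        refine ⟨hp1, ?_⟩
        simp only [Set.mem_iInter] at hp2 ⊢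
        exact fun i hi => hp2 i (Finset.mem_insert_of_mem hi)
      have hqD : q ∈ ((⋃ i ∈ insert a s, C i) ∩ ⋂ i ∈ t, C i) := by
        refine ⟨hq1, ?_⟩
        simp only [Set.mem_iInter] at hq2 ⊢
        exact fun i hi => hq2 i (hts.1 hi)
      obtain ⟨x, hxD, hx⟩ := hDc.isPreconnected.intermediate_value hpD hqD f.continuous.continuousOn
        ⟨hfp.le, hfq.le⟩
      refine ⟨x, ?_, ?_⟩
      · rw [hUe]; exact ⟨hxD.1, hx⟩
      · have := hxD.2
        simp only [Set.mem_iInter] at this ⊢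
        exact fun i hi => ⟨this i hi, hx⟩

lemma btc_kkm {E : Type*} [NormedAddCommGroup E] [NormedSpace ℝ E] (X : Set E) (hX : IsCompact X)
    (hXc : Convex ℝ X) (hne : X.Nonempty) (B : E → Set E) (hBc : ∀ q ∈ X, IsClosed (B q))
    (hBv : ∀ q ∈ X, Convex ℝ (B q))
    (hk : ∀ t : Finset E, (t : Set E) ⊆ X → ∀ p ∈ convexHull ℝ (t : Set E), ∃ q ∈ t, p ∈ B q) :
    ∃ p ∈ X, ∀ q ∈ X, p ∈ B q := by
  classical
  have fin : ∀ t : Finset E, t.Nonempty → (t : Set E) ⊆ X →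
      (convexHull ℝ (t : Set E) ∩ ⋂ q ∈ t, B q).Nonempty := by
    intro t
    induction t using Finset.strongInduction with
    | H t ih =>
      intro htne htX
      let C : E → Set E := fun q => if q ∈ t then convexHull ℝ (t : Set E) ∩ B q else ∅
      have hCt : ∀ q ∈ t, C q = convexHull ℝ (t : Set E) ∩ B q := fun q hq => by simp [C, hq]
      have hU : (⋃ i ∈ t, C i) = convexHull ℝ (t : Set E) := by
        ext x
        simp only [Set.mem_iUnion]
        constructor
        · rintro ⟨i, hi, hx⟩; rw [hCt i hi] at hx; exact hx.1
        · intro hx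
          obtain ⟨q, hq, h⟩ := hk t htX x hx
          exact ⟨q, hq, by rw [hCt q hq]; exact ⟨hx, h⟩⟩
      have := btc_berge t htne C ?_ ?_ (by rw [hU]; exact convex_convexHull ℝ _) ?_
      · obtain ⟨x, hx1, hx2⟩ := this
        rw [hU] at hx1
        refine ⟨x, hx1, ?_⟩
        simp only [Set.mem_iInter] at hx2 ⊢
        intro i hi
        have := hx2 i hi
        rw [hCt i hi] at this
        exact this.2
      · intro i
        by_cases hi : i ∈ t
        · rw [hCt i hi]
          exact (t.finite_toSet.isCompact_convexHull (𝕜 := ℝ)).inter_right (hBc i (htX hi))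
        · simp [C, hi]
      · intro i
        by_cases hi : i ∈ t
        · rw [hCt i hi]
          exact (convex_convexHull ℝ _).inter (hBv i (htX hi))
        · simp [C, hi, convex_empty]
      · intro t' ht'
        rw [hU]
        rcases t'.eq_empty_or_nonempty with rfl | hne'
        · obtain ⟨q, hq⟩ := htne
          exact ⟨q, subset_convexHull ℝ _ hq, by simp⟩
        · have hsub : (t' : Set E) ⊆ t := by exact_mod_cast ht'.1
          obtain ⟨x, hx1, hx2⟩ := ih t' ht' hne' (hsub.trans htX)
          have hx3 := convexHull_mono hsub hx1
          refine ⟨x, hx3, ?_⟩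
          simp only [Set.mem_iInter] at hx2 ⊢
          intro i hi
          rw [hCt i (ht'.1 hi)]
          exact ⟨hx3, hx2 i hi⟩
  have := hX.inter_iInter_nonempty (fun q : X => B q) (fun q => hBc q q.2) ?_
  · obtain ⟨p, hp, hp2⟩ := this
    simp only [Set.mem_iInter] at hp2
    exact ⟨p, hp, fun q hq => hp2 ⟨q, hq⟩⟩
  · intro u
    rcases u.eq_empty_or_nonempty with rfl | hu
    · simpa using hne
    · obtain ⟨x, hx1, hx2⟩ := fin (u.image Subtype.val) (hu.image _) (by
        intro x hx; simp at hx; exact hx.1)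
      refine ⟨x, convexHull_min (by intro x hx; simp at hx; exact hx.1) hXc hx1, ?_⟩
      simp only [Set.mem_iInter, Finset.mem_image] at hx2 ⊢
      exact fun i hi => hx2 i ⟨i, hi, rfl⟩

/-- `v` is a common support with sign pattern `ε`, touching at `y`, positively oriented. -/
def BtcSol {d : ℕ} (L : Fin d → Set (Fin (d+1) → ℝ)) (ε : Fin d → ℝ)
    (v : Fin (d+1) → ℝ) (y : Fin d → Fin (d+1) → ℝ) : Prop :=
  (∀ i, y i ∈ L i) ∧ (∀ i, y i ⬝ᵥ v = 0) ∧ (∀ i, ∀ z ∈ L i, 0 ≤ ε i * (z ⬝ᵥ v)) ∧ 0 < btcD v y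

lemma btc_unique {d : ℕ} (L : Fin d → Set (Fin (d+1) → ℝ)) (hconv : ∀ i, Convex ℝ (L i))
    (hind : ∀ y : Fin d → Fin (d+1) → ℝ, (∀ i, y i ∈ L i) → LinearIndependent ℝ y)
    (ε : Fin d → ℝ) (hε : ∀ i, ε i ≠ 0) (v w y y') (h : BtcSol L ε v y) (h' : BtcSol L ε w y') :
    ∃ c : ℝ, 0 < c ∧ v = c • w := by
  refine btc_path L hconv hind y y' v w h.1 h'.1 h.2.1 h'.2.1 (fun i => ?_) h.2.2.2 h'.2.2.2
  have h1 := h.2.2.1 i (y' i) (h'.1 i)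
  have h2 := h'.2.2.1 i (y i) (h.1 i)
  have h3 := mul_nonneg h1 h2
  have h4 : 0 < ε i * ε i := mul_self_pos.mpr (hε i)
  exact nonneg_of_mul_nonneg_right (by nlinarith) h4

lemma btc_exists {d : ℕ} (ε : Fin d → ℝ) (hε : ∀ i, ε i ≠ 0) (s : Finset (Fin d)) :
    ∀ (L : Fin d → Set (Fin (d+1) → ℝ)), (∀ i, Convex ℝ (L i)) → (∀ i, IsCompact (L i)) →
    (∀ i, (L i).Nonempty) →
    (∀ y : Fin d → Fin (d+1) → ℝ, (∀ i, y i ∈ L i) → LinearIndependent ℝ y) →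
    (∀ i, i ∉ s → (L i).Subsingleton) → ∃ v y, BtcSol L ε v y := by
  classical
  induction s using Finset.induction_on with
  | empty =>
    intro L hconv hcomp hne hind hsub
    choose y hy using hne
    have hk := LinearMap.ker_ne_bot_of_finrank_lt (f := Matrix.mulVecLin (Matrix.of y)) (by simp)
    obtain ⟨v, hv, hv0⟩ := Submodule.exists_mem_ne_zero_of_ne_bot hk
    have ho : ∀ i, y i ⬝ᵥ v = 0 := by
      intro i
      have := congrFun (LinearMap.mem_ker.mp hv) i
      simpa [Matrix.mulVec] using this
    have hz : ∀ i, ∀ z ∈ L i, z ⬝ᵥ v = 0 := by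
      intro i z hz
      rw [hsub i (by simp) hz (hy i)]; exact ho i
    rcases lt_or_gt_of_ne (btc_det_ne y v (hind y hy) hv0 ho) with h | h
    · refine ⟨(-1:ℝ) • v, y, hy, by simp [ho], ?_, ?_⟩
      · intro i z hzi; simp [hz i z hzi]
      · rw [btcD_smul]; change btcD v y < 0 at h; linarith
    · exact ⟨v, y, hy, ho, fun i z hzi => by simp [hz i z hzi], h⟩
  | insert k s hks ih =>
    intro L hconv hcomp hne hind hsub
    have hsol : ∀ p ∈ L k, ∃ v y, BtcSol (Function.update L k {p}) ε v y := by
      intro p hp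
      have hle : ∀ i, Function.update L k {p} i ⊆ L i := by
        intro i
        by_cases hi : i = k
        · subst hi; simpa using hp
        · simp [hi]
      refine ih _ ?_ ?_ ?_ (fun y hy => hind y fun i => hle i (hy i)) ?_ <;> intro i <;>
        by_cases hi : i = k
      · subst hi; simp
      · simpa [hi] using hconv i
      · subst hi; simp
      · simpa [hi] using hcomp i
      · subst hi; simp
      · simpa [hi] using hne i
      · subst hi; simp
      · intro his; simpa [hi] using hsub i (by simp [hi, his])
    choose! V Y hVY using hsol
    have hYk : ∀ p ∈ L k, Y p k = p := fun p hp => by simpa using (hVY p hp).1 k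
    have hYL : ∀ p ∈ L k, ∀ i, Y p i ∈ L i := by
      intro p hp i
      by_cases hi : i = k
      · subst hi; rw [hYk p hp]; exact hp
      · simpa [hi] using (hVY p hp).1 i
    have hp0 : ∀ p ∈ L k, p ⬝ᵥ V p = 0 := by
      intro p hp
      have := (hVY p hp).2.1 k
      rwa [hYk p hp] at this
    have hVi : ∀ p ∈ L k, ∀ i, i ≠ k → ∀ z ∈ L i, 0 ≤ ε i * (z ⬝ᵥ V p) := by
      intro p hp i hi z hz
      exact (hVY p hp).2.2.1 i z (by simpa [hi] using hz)
    have hpar : ∀ p ∈ L k, ∀ q ∈ L k, 0 ≤ (q ⬝ᵥ V p) * (p ⬝ᵥ V q) →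
        q ⬝ᵥ V p = 0 ∧ p ⬝ᵥ V q = 0 := by
      intro p hp q hq h
      obtain ⟨c, hc, he⟩ := btc_path L hconv hind (Y p) (Y q) (V p) (V q) (hYL p hp) (hYL q hq)
        (hVY p hp).2.1 (hVY q hq).2.1 (by
          intro i
          by_cases hi : i = k
          · subst hi; rw [hYk p hp, hYk q hq]; exact h
          · have h1 := hVi p hp i hi _ (hYL q hq i)
            have h2 := hVi q hq i hi _ (hYL p hp i)
            have h3 := mul_nonneg h1 h2
            have h4 : 0 < ε i * ε i := mul_self_pos.mpr (hε i)
            exact nonneg_of_mul_nonneg_right (by nlinarith) h4) (hVY p hp).2.2.2 (hVY q hq).2.2.2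
      constructor
      · rw [he, dotProduct_smul, hp0 q hq, smul_zero]
      · have := hp0 p hp
        rw [he, dotProduct_smul, smul_eq_mul] at this
        exact (mul_eq_zero.mp this).resolve_left hc.ne'
    have hequiv1 : ∀ p ∈ L k, ∀ q ∈ L k, 0 ≤ ε k * (q ⬝ᵥ V p) → ε k * (p ⬝ᵥ V q) ≤ 0 := by
      intro p hp q hq h
      by_contra hcon
      push Not at hcon
      have h3 := mul_nonneg h hcon.le
      have h4 : 0 < ε k * ε k := mul_self_pos.mpr (hε k)
      have := (hpar p hp q hq (nonneg_of_mul_nonneg_right (by nlinarith) h4)).2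
      rw [this] at hcon; simp at hcon
    have hequiv2 : ∀ p ∈ L k, ∀ q ∈ L k, ε k * (p ⬝ᵥ V q) ≤ 0 → 0 ≤ ε k * (q ⬝ᵥ V p) := by
      intro p hp q hq h
      by_contra hcon
      push Not at hcon
      have h3 := mul_nonneg_of_nonpos_of_nonpos hcon.le h
      have h4 : 0 < ε k * ε k := mul_self_pos.mpr (hε k)
      have := (hpar p hp q hq (nonneg_of_mul_nonneg_right (by nlinarith) h4)).1
      rw [this] at hcon; simp at hcon
    have hlin : ∀ x : Fin (d+1) → ℝ, IsLinearMap ℝ (fun p : Fin (d+1) → ℝ => ε k * (p ⬝ᵥ x)) := by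
      intro x
      refine ⟨fun a b => by rw [add_dotProduct, mul_add], fun c a => by
        rw [smul_dotProduct, smul_eq_mul, smul_eq_mul]; ring⟩
    obtain ⟨p, hp, hpq⟩ := btc_kkm (L k) (hcomp k) (hconv k) (hne k)
      (fun q => {p | ε k * (p ⬝ᵥ V q) ≤ 0})
      (fun q _ => isClosed_le (by unfold dotProduct; fun_prop) continuous_const)
      (fun q _ => convex_halfSpace_le (hlin (V q)) 0) (by
        intro t ht p hpt
        have hp : p ∈ L k := convexHull_min ht (hconv k) hpt
        by_contra hcon
        push Not at hcon
        have hneg : (t : Set (Fin (d+1) → ℝ)) ⊆ {q | ε k * (q ⬝ᵥ V p) < 0} := by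
          intro q hq
          by_contra hq2
          exact hcon q hq (hequiv1 p hp q (ht hq) (not_lt.mp hq2))
        have := convexHull_min hneg (convex_halfSpace_lt (hlin (V p)) 0) hpt
        simp [hp0 p hp] at this)
    refine ⟨V p, Y p, hYL p hp, (hVY p hp).2.1, ?_, (hVY p hp).2.2.2⟩
    intro i z hz
    by_cases hi : i = k
    · subst hi
      exact hequiv2 p hp z hz (hpq z hz)
    · exact hVi p hp i hi z hz

/-- the lift of a point to homogeneous coordinates -/
def btcLift {d : ℕ} (x : EuclideanSpace ℝ (Fin d)) : Fin (d+1) → ℝ := Fin.cons 1 x.ofLp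

lemma btcLift_dot {d : ℕ} (x : EuclideanSpace ℝ (Fin d)) (v : Fin (d+1) → ℝ) :
    btcLift x ⬝ᵥ v = v 0 + ⟪WithLp.toLp 2 (Fin.tail v), x⟫_ℝ := by
  simp [btcLift, dotProduct, Fin.sum_univ_succ, PiLp.inner_apply, Fin.tail]

lemma btcLift_cons {d : ℕ} (x u : EuclideanSpace ℝ (Fin d)) (a : ℝ) :
    btcLift x ⬝ᵥ (Fin.cons (-a) u.ofLp : Fin (d+1) → ℝ) = ⟪u, x⟫_ℝ - a := by
  rw [btcLift_dot]; simp; ring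

lemma btcLift_continuous {d : ℕ} : Continuous (btcLift : EuclideanSpace ℝ (Fin d) → _) := by
  unfold btcLift
  refine continuous_pi fun i => ?_
  refine Fin.cases ?_ (fun i => ?_) i
  · simpa using continuous_const
  · simp only [Fin.cons_succ]; fun_prop

lemma btcLift_convex {d : ℕ} {K : Set (EuclideanSpace ℝ (Fin d))} (hK : Convex ℝ K) :
    Convex ℝ (btcLift '' K) := by
  rintro _ ⟨x, hx, rfl⟩ _ ⟨y, hy, rfl⟩ a b ha hb hab
  refine ⟨a • x + b • y, hK hx hy ha hb hab, ?_⟩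
  funext i
  refine Fin.cases ?_ (fun i => ?_) i
  · simp [btcLift, hab]
  · simp [btcLift]

lemma btcLift_indep {d : ℕ} {K : Fin d → Set (EuclideanSpace ℝ (Fin d))} (hsep : StronglySeparated K)
    (y : Fin d → Fin (d+1) → ℝ) (hy : ∀ i, y i ∈ btcLift '' K i) : LinearIndependent ℝ y := by
  classical
  choose x hx hxy using hy
  rw [Fintype.linearIndependent_iff]
  intro c hc
  obtain ⟨u, a, _, h1, h2⟩ := hsep (Finset.univ.filter fun i => c i < 0)
  have hs : ∑ i, c i * (⟪u, x i⟫_ℝ - a) = 0 := by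
    have := congrArg (fun z => z ⬝ᵥ (Fin.cons (-a) u.ofLp : Fin (d+1) → ℝ)) hc
    simp only [sum_dotProduct, smul_dotProduct, zero_dotProduct, smul_eq_mul] at this
    rw [← this]
    refine Finset.sum_congr rfl fun i _ => ?_
    rw [← hxy i, btcLift_cons]
  have hn : ∀ i, 0 ≤ c i * (⟪u, x i⟫_ℝ - a) := by
    intro i
    by_cases h : c i < 0
    · have := h1 i (by simpa using h) _ (hx i)
      exact mul_nonneg_of_nonpos_of_nonpos h.le (by linarith)
    · have := h2 i (by simpa using h) _ (hx i)
      exact mul_nonneg (not_lt.mp h) (by linarith)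
  intro i
  have h0 := (Finset.sum_eq_zero_iff_of_nonneg (fun i _ => hn i)).mp hs i (Finset.mem_univ i)
  rcases mul_eq_zero.mp h0 with h | h
  · exact h
  · exfalso
    by_cases hi : c i < 0
    · have := h1 i (by simpa using hi) _ (hx i); linarith
    · have := h2 i (by simpa using hi) _ (hx i); linarith

lemma btc_interior {d : ℕ} {K : Set (EuclideanSpace ℝ (Fin d))} (hK : (interior K).Nonempty)
    (u : EuclideanSpace ℝ (Fin d)) (hu : u ≠ 0) (a : ℝ) (h : ∀ x ∈ K, a + ⟪u, x⟫_ℝ = 0) : False := by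
  obtain ⟨x, hx⟩ := hK
  have hc : Filter.Tendsto (fun t : ℝ => x + t • u) (nhds 0) (nhds x) := by
    have : Continuous (fun t : ℝ => x + t • u) := by fun_prop
    simpa using this.tendsto 0
  have he := hc (mem_interior_iff_mem_nhds.mp hx)
  obtain ⟨r, hr, hb⟩ := Metric.mem_nhds_iff.mp he
  have h1 := h _ (hb (show r / 2 ∈ Metric.ball (0:ℝ) r by
    rw [Metric.mem_ball, Real.dist_eq, sub_zero, abs_of_pos] <;> linarith))
  have h2 := h x (interior_subset hx)
  rw [inner_add_right, inner_smul_right] at h1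
  have h3 : 0 < ⟪u, u⟫_ℝ := real_inner_self_pos.mpr hu
  have : 0 < r / 2 * ⟪u, u⟫_ℝ := by positivity
  linarith

/-- Bisztriczky's theorem, total count: a strongly separated family of `d` convex bodies
in `ℝ^d` has exactly `2^d` common tangent affine hyperplanes. -/
theorem bisztriczky_total_count {d : ℕ}
    (K : Fin d → Set (EuclideanSpace ℝ (Fin d)))
    (hcomp : ∀ i, IsCompact (K i)) (hconv : ∀ i, Convex ℝ (K i))
    (hint : ∀ i, (interior (K i)).Nonempty)
    (hsep : StronglySeparated K) :
    {H : Set (EuclideanSpace ℝ (Fin d)) | ∃ (u : EuclideanSpace ℝ (Fin d)) (α : ℝ),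
        u ≠ 0 ∧ H = {x | ⟪u, x⟫_ℝ = α} ∧
        ∀ i : Fin d, (H ∩ K i).Nonempty ∧
          (K i ⊆ {x | α ≤ ⟪u, x⟫_ℝ} ∨ K i ⊆ {x | ⟪u, x⟫_ℝ ≤ α})}.encard = 2 ^ d := by
  classical
  have hd : Nonempty (Fin d) := by
    obtain ⟨u, _, hu, _⟩ := hsep ∅
    by_contra h
    rw [not_nonempty_iff] at h
    exact hu (Subsingleton.elim _ _)
  let L : Fin d → Set (Fin (d+1) → ℝ) := fun i => btcLift '' K i
  have hLconv : ∀ i, Convex ℝ (L i) := fun i => btcLift_convex (hconv i)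
  have hLcomp : ∀ i, IsCompact (L i) := fun i => (hcomp i).image btcLift_continuous
  have hLne : ∀ i, (L i).Nonempty := fun i => ((hint i).mono interior_subset).image _
  have hLind : ∀ y : Fin d → Fin (d+1) → ℝ, (∀ i, y i ∈ L i) → LinearIndependent ℝ y :=
    fun y hy => btcLift_indep hsep y hy
  let ε : (Fin d → Bool) → Fin d → ℝ := fun b i => if b i then 1 else -1
  have hε : ∀ b i, ε b i ≠ 0 := by intro b i; simp only [ε]; split_ifs <;> norm_num
  have hex : ∀ b, ∃ v y, BtcSol L (ε b) v y := fun b =>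
    btc_exists (ε b) (hε b) Finset.univ L hLconv hLcomp hLne hLind (by simp)
  choose V Y hVY using hex
  let U : (Fin d → Bool) → EuclideanSpace ℝ (Fin d) := fun b => WithLp.toLp 2 (Fin.tail (V b))
  have hU : ∀ b, U b ≠ 0 := by
    intro b h0
    obtain ⟨i⟩ := hd
    have h1 := (hVY b).2.1 i
    obtain ⟨x, _, hx⟩ := (hVY b).1 i
    rw [← hx, btcLift_dot] at h1
    change V b 0 + ⟪U b, x⟫_ℝ = 0 at h1
    rw [h0, inner_zero_left, add_zero] at h1
    apply btcD_ne_v (hVY b).2.2.2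
    funext j
    refine Fin.cases h1 (fun j => ?_) j
    have := congrArg (fun z : EuclideanSpace ℝ (Fin d) => z j) h0
    simpa [U, Fin.tail] using this
  let Φ : (Fin d → Bool) → Set (EuclideanSpace ℝ (Fin d)) := fun b => {x | btcLift x ⬝ᵥ V b = 0}
  have hinj : Function.Injective Φ := by
    intro b b' hbb
    have hmem : ∀ b b', Φ b = Φ b' → ∀ i, Y b' i ⬝ᵥ V b = 0 := by
      intro b b' hbb i
      obtain ⟨x, _, hx⟩ := (hVY b').1 i
      have h1 : x ∈ Φ b' := by
        show btcLift x ⬝ᵥ V b' = 0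
        rw [hx]; exact (hVY b').2.1 i
      rw [← hbb] at h1
      rw [← hx]; exact h1
    obtain ⟨c, hc, he⟩ := btc_path L hLconv hLind (Y b) (Y b') (V b) (V b') (hVY b).1 (hVY b').1
      (hVY b).2.1 (hVY b').2.1 (fun i => by rw [hmem b b' hbb i, zero_mul])
      (hVY b).2.2.2 (hVY b').2.2.2
    funext i
    by_contra hne
    refine btc_interior (hint i) (U b') (hU b') (V b' 0) (fun x hx => ?_)
    have h1 := (hVY b).2.2.1 i _ ⟨x, hx, rfl⟩
    have h2 := (hVY b').2.2.1 i _ ⟨x, hx, rfl⟩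
    rw [he, dotProduct_smul, smul_eq_mul] at h1
    rw [← btcLift_dot]
    have hs : ε b i = - ε b' i := by
      simp only [ε]
      cases hb : b i <;> cases hb' : b' i <;> simp_all
    rw [hs] at h1
    have h3 : 0 ≤ c * (-(ε b' i * (btcLift x ⬝ᵥ V b'))) := by linarith
    have h4 := nonneg_of_mul_nonneg_right h3 hc
    have h5 : ε b' i * (btcLift x ⬝ᵥ V b') = 0 := by linarith
    exact (mul_eq_zero.mp h5).resolve_left (hε b' i)
  have hmain : ∀ (v : Fin (d+1) → ℝ) (y : Fin d → Fin (d+1) → ℝ), (∀ i, y i ∈ L i) →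
      (∀ i, y i ⬝ᵥ v = 0) → 0 < btcD v y →
      (∀ i, (∀ z ∈ L i, 0 ≤ z ⬝ᵥ v) ∨ (∀ z ∈ L i, z ⬝ᵥ v ≤ 0)) →
      {x | btcLift x ⬝ᵥ v = 0} ∈ Set.range Φ := by
    intro v y hy hv hD hside
    let b : Fin d → Bool := fun i => decide (∀ z ∈ L i, 0 ≤ z ⬝ᵥ v)
    have hsol : BtcSol L (ε b) v y := by
      refine ⟨hy, hv, ?_, hD⟩
      intro i z hz
      by_cases h : ∀ z ∈ L i, 0 ≤ z ⬝ᵥ v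
      · have : ε b i = 1 := by simp only [ε, b]; rw [if_pos (by simpa using h)]
        rw [this, one_mul]; exact h z hz
      · have : ε b i = -1 := by simp only [ε, b]; rw [if_neg (by simpa using h)]
        have := (hside i).resolve_left h z hz
        rw [‹ε b i = -1›]; linarith
    obtain ⟨c, hc, he⟩ := btc_unique L hLconv hLind (ε b) (hε b) (V b) v (Y b) y (hVY b) hsol
    refine ⟨b, ?_⟩
    ext x
    show btcLift x ⬝ᵥ V b = 0 ↔ btcLift x ⬝ᵥ v = 0
    rw [he, dotProduct_smul, smul_eq_mul, mul_eq_zero]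
    simp [hc.ne']
  have hrange : {H : Set (EuclideanSpace ℝ (Fin d)) | ∃ (u : EuclideanSpace ℝ (Fin d)) (α : ℝ),
        u ≠ 0 ∧ H = {x | ⟪u, x⟫_ℝ = α} ∧
        ∀ i : Fin d, (H ∩ K i).Nonempty ∧
          (K i ⊆ {x | α ≤ ⟪u, x⟫_ℝ} ∨ K i ⊆ {x | ⟪u, x⟫_ℝ ≤ α})} = Set.range Φ := by
    ext H
    constructor
    · rintro ⟨u, α, hu, hH, hi⟩
      let v : Fin (d+1) → ℝ := Fin.cons (-α) u.ofLp
      have hdot : ∀ x, btcLift x ⬝ᵥ v = ⟪u, x⟫_ℝ - α := fun x => btcLift_cons x u α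
      have hv0 : v ≠ 0 := by
        intro h
        apply hu
        ext j
        have := congrFun h j.succ
        simpa [v] using this
      choose x hx using fun i => (hi i).1
      have hy : ∀ i, btcLift (x i) ∈ L i := fun i => ⟨x i, (hx i).2, rfl⟩
      have hyv : ∀ i, btcLift (x i) ⬝ᵥ v = 0 := by
        intro i
        have h1 := (hx i).1
        rw [hH] at h1
        have h2 : ⟪u, x i⟫_ℝ = α := h1
        rw [hdot, h2, sub_self]
      have hHe : H = {x | btcLift x ⬝ᵥ v = 0} := by
        rw [hH]; ext z
        show ⟪u, z⟫_ℝ = α ↔ btcLift z ⬝ᵥ v = 0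
        rw [hdot, sub_eq_zero]
      have hside : ∀ i, (∀ z ∈ L i, 0 ≤ z ⬝ᵥ v) ∨ (∀ z ∈ L i, z ⬝ᵥ v ≤ 0) := by
        intro i
        rcases (hi i).2 with h | h
        · left
          rintro _ ⟨z, hz, rfl⟩
          have : α ≤ ⟪u, z⟫_ℝ := h hz
          rw [hdot]; linarith
        · right
          rintro _ ⟨z, hz, rfl⟩
          have : ⟪u, z⟫_ℝ ≤ α := h hz
          rw [hdot]; linarith
      rcases lt_or_gt_of_ne (btc_det_ne _ v (hLind _ hy) hv0 hyv) with h | h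
      · have hm := hmain ((-1:ℝ) • v) _ hy (fun i => by rw [dotProduct_smul, hyv, smul_zero])
          (by rw [btcD_smul]; change btcD v _ < 0 at h; linarith)
          (by
            intro i
            rcases hside i with h | h
            · right; intro z hz; have := h z hz; rw [dotProduct_smul, smul_eq_mul]; linarith
            · left; intro z hz; have := h z hz; rw [dotProduct_smul, smul_eq_mul]; linarith)
        have e : H = {x | btcLift x ⬝ᵥ ((-1:ℝ) • v) = 0} := by
          rw [hHe]; ext z
          show btcLift z ⬝ᵥ v = 0 ↔ btcLift z ⬝ᵥ ((-1:ℝ) • v) = 0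
          rw [dotProduct_smul, smul_eq_mul, mul_eq_zero]; norm_num
        rw [e]; exact hm
      · rw [hHe]; exact hmain v _ hy hyv h hside
    · rintro ⟨b, rfl⟩
      have hdot : ∀ x, btcLift x ⬝ᵥ V b = V b 0 + ⟪U b, x⟫_ℝ := fun x => btcLift_dot x (V b)
      refine ⟨U b, - V b 0, hU b, ?_, ?_⟩
      · ext x
        show btcLift x ⬝ᵥ V b = 0 ↔ ⟪U b, x⟫_ℝ = - V b 0
        rw [hdot]
        constructor <;> intro h <;> linarith
      · intro i
        constructor
        · obtain ⟨x, hx, hxy⟩ := (hVY b).1 i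
          refine ⟨x, ?_, hx⟩
          show btcLift x ⬝ᵥ V b = 0
          rw [hxy]; exact (hVY b).2.1 i
        · have h := (hVY b).2.2.1 i
          cases hb : b i
          · right
            intro x hx
            have h1 := h _ ⟨x, hx, rfl⟩
            rw [hdot] at h1
            simp only [ε, hb] at h1
            show ⟪U b, x⟫_ℝ ≤ - V b 0
            norm_num at h1
            linarith
          · left
            intro x hx
            have h1 := h _ ⟨x, hx, rfl⟩
            rw [hdot] at h1
            simp only [ε, hb] at h1
            show - V b 0 ≤ ⟪U b, x⟫_ℝ
            norm_num at h1
            linarith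
  rw [hrange, ← Set.image_univ, hinj.encard_image]
  simp
end
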